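/- arXiv:1205.5993 — 5 statements merged into one kernel-verified Lean document; each statement's English description precedes it below -/
import Mathlib

section
/- Fix n ∈ ℕ and let (M, d_M) be a compact metric space of Hausdorff dimension strictly greater than n. Then there exists a Lipschitz mapping from M onto the cube [0,1]^n, i.e., there exist a surjection f : M → [0,1]^n and L ∈ (0,∞) such that ‖f(x) − f(y)‖ ≤ L d_M(x,y) for all x,y ∈ M. -/
open scoped ENNReal

universe u

/-!
Let `n < α < β < dimH M`. The `β`-dimensional Hausdorff content of `M` at some small size `δ` is
positive and finite, and at most a multiple of `ρ ^ β` on balls of small radius `ρ`. On a finite net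
of `M` one repeatedly cuts out heavy balls surrounded by light annuli; concatenating curves in the
separated pieces over a geometric sequence of scales yields maps `[0, a) → M` whose inverse is
`α`-Hölder above a given scale `ε`, with `a` and the Hölder constant independent of `ε`. By
compactness one may let `ε → 0`. As `n < α`, the cube embeds in `[0, a)` with
`dist q s ^ α ≤ D * |p q - p s|`, by interleaving binary digits. The composition is a map from the
cube to `M` with Lipschitz inverse, which is extended to `M` coordinatewise and clamped to the cube.
-/

open Set Metric MeasureTheory Filter Topology
open scoped NNReal

section FiniteSpaces

variable {X : Type*} {φ : Set X → ℝ}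

/-- A real-valued submeasure on all subsets of `X`: a monotone, finitely subadditive set function
vanishing on `∅`. -/
structure IsSubmeasure (φ : Set X → ℝ) : Prop where
  empty : φ ∅ = 0
  mono : Monotone φ
  union_le : ∀ A B : Set X, φ (A ∪ B) ≤ φ A + φ B

lemma isSubmeasure_toReal {μ : OuterMeasure X} (hμ : μ univ ≠ ∞) :
    IsSubmeasure fun A => (μ A).toReal := by
  have hfin : ∀ A, μ A ≠ ∞ := fun A => ne_top_of_le_ne_top hμ (μ.mono (subset_univ A))
  refine ⟨by simp, fun A B hAB => ENNReal.toReal_mono (hfin B) (μ.mono hAB), fun A B => ?_⟩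
  rw [← ENNReal.toReal_add (hfin A) (hfin B)]
  exact ENNReal.toReal_mono (ENNReal.add_ne_top.2 ⟨hfin A, hfin B⟩) (measure_union_le A B)

namespace IsSubmeasure

lemma nonneg (hφ : IsSubmeasure φ) (A : Set X) : 0 ≤ φ A :=
  hφ.empty ▸ hφ.mono (empty_subset A)

lemma le_inter_add_diff (hφ : IsSubmeasure φ) (A B : Set X) : φ A ≤ φ (A ∩ B) + φ (A \ B) := by
  simpa only [inter_union_sdiff] using hφ.union_le (A ∩ B) (A \ B)

variable [PseudoMetricSpace X]

lemma exists_max_closedBall [Finite X] (hφ : IsSubmeasure φ) {S : Set X} (hS : 0 < φ S)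
    {r : ℝ} (hr : 0 ≤ r) :
    ∃ x₀ ∈ S, 0 < φ (S ∩ closedBall x₀ r) ∧
      ∀ x ∈ S, φ (S ∩ closedBall x r) ≤ φ (S ∩ closedBall x₀ r) := by
  have hne : S.Nonempty := nonempty_iff_ne_empty.2 (by rintro rfl; exact hS.ne' hφ.empty)
  obtain ⟨x₀, hx₀, hmax⟩ :=
    exists_max_image S (fun x => φ (S ∩ closedBall x r)) S.toFinite hne
  refine ⟨x₀, hx₀, ?_, hmax⟩
  by_contra! hnull
  have hcover : S ⊆ ⋃ x ∈ S.toFinite.toFinset, S ∩ closedBall x r := fun x hx =>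
    mem_biUnion ((Finite.mem_toFinset _).2 hx) ⟨hx, mem_closedBall_self hr⟩
  have hle : φ S ≤ 0 :=
    calc φ S ≤ ∑ x ∈ S.toFinite.toFinset, φ (S ∩ closedBall x r) :=
          (hφ.mono hcover).trans
            (Finset.apply_union_le_sum hφ.empty (fun {A B} => hφ.union_le A B) _)
      _ ≤ 0 := Finset.sum_nonpos fun x hx => (hmax x ((Finite.mem_toFinset _).1 hx)).trans hnull
  exact hle.not_gt hS

end IsSubmeasure

lemma exists_lt_succ_le_rpow_mul {b : ℕ → ℝ} {T : ℕ} (hT : T ≠ 0) {m : ℝ} (hb : 0 < b 0)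
    (hm : 0 ≤ m) (hbT : b T ≤ m) :
    ∃ t < T, b (t + 1) ≤ (m / b 0) ^ (T⁻¹ : ℝ) * b t := by
  by_contra! hgrow
  have hq : ((m / b 0) ^ (T⁻¹ : ℝ)) ^ T * b 0 < b T :=
    geom_lt (by positivity) (Nat.pos_of_ne_zero hT) hgrow
  rw [Real.rpow_inv_natCast_pow (by positivity) hT, div_mul_cancel₀ _ hb.ne'] at hq
  exact hbT.not_gt hq

lemma le_mul_rpow_of_rpow_one_sub_le {b m κ θ : ℝ} (hb : 0 ≤ b) (hbm : b ≤ m) (hθ : 0 ≤ θ)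
    (h : b ^ (1 - θ) ≤ κ) : b ≤ κ * m ^ θ :=
  calc b = b ^ (1 - θ) * b ^ θ := by
        rw [← Real.rpow_add' hb (by simp), sub_add_cancel, Real.rpow_one]
    _ ≤ κ * m ^ θ := mul_le_mul h (Real.rpow_le_rpow hb hbm hθ) (by positivity)
        (h.trans' (by positivity))

variable [PseudoMetricSpace X]

-- Around a point `x₀` with the heaviest `r`-ball, some annulus of width `r` is light by the
-- pigeonhole principle; discarding it separates a ball `S₁` from the remainder `S₂`.
lemma IsSubmeasure.exists_separated_parts [Finite X] (hφ : IsSubmeasure φ) {T : ℕ} (hT : T ≠ 0)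
    {r m κ : ℝ} (hr : 0 < r) (hm : 0 < m)
    (hgrowth : ∀ x, φ (closedBall x ((T + 1) * r)) ^ (1 - (T : ℝ)⁻¹) ≤ κ)
    {S : Set X} (hS : 0 < φ S) (hball : ∀ x ∈ S, φ (S ∩ closedBall x ((T + 1) * r)) ≤ m) :
    ∃ S₁ ⊆ S, ∃ S₂ ⊂ S, ∃ m₁ > 0,
      (∀ y ∈ S₁, ∀ z ∈ S₂, r ≤ dist y z) ∧
      (∀ x ∈ S₁, φ (S₁ ∩ closedBall x r) ≤ m₁) ∧
      φ S ≤ min κ (φ S₁ / m₁ ^ (T⁻¹ : ℝ)) * m ^ (T⁻¹ : ℝ) + φ S₂ := by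
  obtain ⟨x₀, hx₀, hpos, hmax⟩ := hφ.exists_max_closedBall hS hr.le
  set b : ℕ → ℝ := fun t => φ (S ∩ closedBall x₀ ((t + 1) * r)) with hb
  have hb0 : b 0 = φ (S ∩ closedBall x₀ r) := by simp [hb]
  obtain ⟨t, htT, ht⟩ := exists_lt_succ_le_rpow_mul hT (hb0 ▸ hpos) hm.le (hball x₀ hx₀)
  rw [Real.div_rpow hm.le (hφ.nonneg _)] at ht
  have hradius : (((t + 1 : ℕ) : ℝ) + 1) * r ≤ (T + 1) * r := by
    gcongr
    exact htT
  have hb_le : b (t + 1) ≤ κ * m ^ (T⁻¹ : ℝ) := by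
    have hbm : b (t + 1) ≤ m :=
      (hφ.mono (inter_subset_inter_right S (closedBall_subset_closedBall hradius))).trans
        (hball x₀ hx₀)
    refine le_mul_rpow_of_rpow_one_sub_le (hφ.nonneg _) hbm (by positivity) ?_
    have hT1 : (T : ℝ)⁻¹ ≤ 1 := Nat.cast_inv_le_one T
    refine (Real.rpow_le_rpow (hφ.nonneg _) (hφ.mono ?_) (sub_nonneg.2 hT1)).trans (hgrowth x₀)
    exact inter_subset_right.trans (closedBall_subset_closedBall hradius)
  refine ⟨S ∩ closedBall x₀ ((t + 1) * r), inter_subset_left,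
    S \ closedBall x₀ ((↑(t + 1) + 1) * r), ?_, b 0, hb0 ▸ hpos, ?_, fun x hx => ?_, ?_⟩
  · exact sdiff_subset.ssubset_of_not_subset fun hsub =>
      (hsub hx₀).2 (mem_closedBall_self (by positivity))
  · rintro y ⟨-, hy⟩ z ⟨-, hz⟩
    rw [mem_closedBall] at hy hz
    push_cast at hz
    linarith [dist_triangle_left z x₀ y]
  · rw [hb0]
    exact (hφ.mono (inter_subset_inter_left _ inter_subset_left)).trans (hmax x hx.1)
  · refine (hφ.le_inter_add_diff S (closedBall x₀ ((↑(t + 1) + 1) * r))).trans ?_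
    gcongr
    rw [min_mul_of_nonneg _ _ (by positivity)]
    refine le_min hb_le (ht.trans_eq ?_)
    ring

/-- `x` is expanding on `I` above scale `ε`: the inverse of `x` is `α`-Hölder with constant `C`
on pairs of parameters more than `ε` apart. For `ε = 0` the inverse is genuinely `α`-Hölder. -/
def IsExpandingAbove (C α ε : ℝ) (x : ℝ → X) (I : Set ℝ) : Prop :=
  ∀ u ∈ I, ∀ v ∈ I, ε < v - u → v - u ≤ C * dist (x u) (x v) ^ α

/-- The concatenation of `x₁` on `(-∞, a)` with `x₂` started at time `a`. -/
noncomputable def concatAt {Y : Type*} (a : ℝ) (x₁ x₂ : ℝ → Y) : ℝ → Y :=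
  fun u => if u < a then x₁ u else x₂ (u - a)

lemma mapsTo_concatAt {Y : Type*} {x₁ x₂ : ℝ → Y} {a₁ a : ℝ} {S : Set Y}
    (h₁ : MapsTo x₁ (Ico 0 a₁) S) (h₂ : MapsTo x₂ (Ico 0 (a - a₁)) S) :
    MapsTo (concatAt a₁ x₁ x₂) (Ico 0 a) S := by
  rintro u ⟨hu0, hua⟩
  unfold concatAt
  split_ifs with hu
  · exact h₁ ⟨hu0, hu⟩
  · exact h₂ ⟨by linarith, by linarith⟩

lemma IsExpandingAbove.concatAt {C α ε a₁ a : ℝ} {x₁ x₂ : ℝ → X}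
    (h₁ : IsExpandingAbove C α ε x₁ (Ico 0 a₁)) (h₂ : IsExpandingAbove C α ε x₂ (Ico 0 (a - a₁)))
    (hε : 0 ≤ ε)
    (hcross : ∀ u ∈ Ico 0 a₁, ∀ v ∈ Ico 0 (a - a₁), a ≤ C * dist (x₁ u) (x₂ v) ^ α) :
    IsExpandingAbove C α ε (concatAt a₁ x₁ x₂) (Ico 0 a) := by
  rintro u ⟨hu0, -⟩ v ⟨hv0, hva⟩ huv
  unfold _root_.concatAt
  split_ifs with hu hv hv
  · exact h₁ u ⟨hu0, hu⟩ v ⟨hv0, hv⟩ huv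
  · linarith [hcross u ⟨hu0, hu⟩ (v - a₁) ⟨by linarith, by linarith⟩]
  · linarith
  · simpa only [sub_sub_sub_cancel_right] using
      h₂ (u - a₁) ⟨by linarith, by linarith⟩ (v - a₁) ⟨by linarith, by linarith⟩ (by linarith)

/-- The inductive statement at scale `R`: a set `S` all of whose `R`-balls have mass at most `m`
contains an expanding curve of any length `a` bounded by `R ^ α` and by `φ S / m ^ θ`. -/
def HasExpandingCurves (φ : Set X → ℝ) (C α ε θ R : ℝ) : Prop :=
  ∀ (S : Set X) (m a : ℝ), 0 < m → (∀ x ∈ S, φ (S ∩ closedBall x R) ≤ m) →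
    a ≤ R ^ α → a * m ^ θ ≤ φ S →
    ∃ x : ℝ → X, MapsTo x (Ico 0 a) S ∧ IsExpandingAbove C α ε x (Ico 0 a)

lemma hasExpandingCurves_rpow [Nonempty X] (hφ : IsSubmeasure φ) (C α θ r : ℝ) :
    HasExpandingCurves φ C α (r ^ α) θ r := by
  intro S m a hm _ har ham
  have hexp : ∀ p : X, IsExpandingAbove C α (r ^ α) (fun _ => p) (Ico 0 a) :=
    fun p u hu v hv huv => by linarith [hu.1, hv.2]
  rcases S.eq_empty_or_nonempty with rfl | ⟨p, hp⟩
  · have ha : a ≤ 0 := nonpos_of_mul_nonpos_left (hφ.empty ▸ ham) (Real.rpow_pos_of_pos hm θ)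
    exact ⟨fun _ => Classical.arbitrary X, by simp [ha], hexp _⟩
  · exact ⟨fun _ => p, fun _ _ => hp, hexp p⟩

lemma HasExpandingCurves.of_smaller_scale [Finite X] [Nonempty X] (hφ : IsSubmeasure φ) {T : ℕ}
    (hT : T ≠ 0) {α ε r : ℝ} (hr : 0 < r) (hα : 0 ≤ α) (hε : 0 ≤ ε)
    (hgrowth : ∀ x, φ (closedBall x ((T + 1) * r)) ^ (1 - (T : ℝ)⁻¹) ≤ r ^ α)
    (hcurves : HasExpandingCurves φ ((T + 1) ^ α) α ε (T : ℝ)⁻¹ r) :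
    HasExpandingCurves φ ((T + 1) ^ α) α ε (T : ℝ)⁻¹ ((T + 1) * r) := by
  intro S
  induction S using WellFoundedLT.induction with
  | ind S ih =>
  intro m a hm hball haR ham
  rcases le_or_gt a 0 with ha | ha
  · rw [Ico_eq_empty_of_le ha]
    exact ⟨fun _ => Classical.arbitrary X, mapsTo_empty _ _, by simp [IsExpandingAbove]⟩
  have hS : 0 < φ S := lt_of_lt_of_le (by positivity) ham
  obtain ⟨S₁, hS₁, S₂, hS₂, m₁, hm₁, hsep, hball₁, hmass⟩ :=
    hφ.exists_separated_parts hT hr hm hgrowth hS hball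
  set a₁ := min (r ^ α) (φ S₁ / m₁ ^ (T⁻¹ : ℝ))
  obtain ⟨x₁, hx₁, hexp₁⟩ := hcurves S₁ m₁ a₁ hm₁ hball₁ (min_le_left _ _)
    ((le_div_iff₀ (by positivity)).1 (min_le_right _ _))
  have ha₁_nonneg : 0 ≤ a₁ := le_min (by positivity) (div_nonneg (hφ.nonneg _) (by positivity))
  obtain ⟨x₂, hx₂, hexp₂⟩ := ih S₂ hS₂ m (a - a₁) hm
    (fun x hx => (hφ.mono (inter_subset_inter_left _ hS₂.subset)).trans (hball x (hS₂.subset hx)))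
    (by linarith) (by linarith)
  refine ⟨concatAt a₁ x₁ x₂, mapsTo_concatAt (hx₁.mono_right hS₁) (hx₂.mono_right hS₂.subset),
    hexp₁.concatAt hexp₂ hε fun u hu v hv => ?_⟩
  have hsep_uv : r ≤ dist (x₁ u) (x₂ v) := hsep _ (hx₁ hu) _ (hx₂ hv)
  calc a ≤ ((T + 1) * r) ^ α := haR
    _ = (T + 1) ^ α * r ^ α := Real.mul_rpow (by positivity) hr.le
    _ ≤ (T + 1) ^ α * dist (x₁ u) (x₂ v) ^ α := by gcongr

lemma hasExpandingCurves_pow_mul [Finite X] [Nonempty X] (hφ : IsSubmeasure φ) {T : ℕ}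
    (hT : T ≠ 0) {α r : ℝ} (hr : 0 < r) (hα : 0 ≤ α) {K : ℕ}
    (hgrowth : ∀ k < K, ∀ x,
      φ (closedBall x ((T + 1) ^ (k + 1) * r)) ^ (1 - (T : ℝ)⁻¹) ≤ ((T + 1) ^ k * r) ^ α) :
    HasExpandingCurves φ ((T + 1) ^ α) α (r ^ α) (T : ℝ)⁻¹ ((T + 1) ^ K * r) := by
  induction K with
  | zero => simpa using hasExpandingCurves_rpow hφ _ α _ r
  | succ K ih =>
    have hgrowthK := hgrowth K K.lt_succ_self
    simp only [pow_succ', mul_assoc] at hgrowthK ⊢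
    exact .of_smaller_scale hφ hT (by positivity) hα (by positivity) hgrowthK
      (ih fun k hk => hgrowth k (hk.trans K.lt_succ_self))

lemma IsSubmeasure.closedBall_pow_succ_mul_rpow_le (hφ : IsSubmeasure φ) {T K : ℕ}
    {c α β r : ℝ} (hr : 0 < r) (hc : 0 ≤ c)
    (hballs : ∀ ρ, r ≤ ρ → ρ ≤ (T + 1) ^ K * r → ∀ x, φ (closedBall x ρ) ≤ (c * ρ) ^ β)
    (hscale : ∀ s, 0 < s → s ≤ (T + 1) ^ K * r →
      (c * (T + 1) * s) ^ (β * (1 - (T : ℝ)⁻¹)) ≤ s ^ α)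
    {k : ℕ} (hk : k < K) (x : X) :
    φ (closedBall x ((T + 1) ^ (k + 1) * r)) ^ (1 - (T : ℝ)⁻¹) ≤ ((T + 1) ^ k * r) ^ α := by
  have hone : (1 : ℝ) ≤ T + 1 := by simp
  have hle : ∀ j ≤ K, (T + 1) ^ j * r ≤ (T + 1) ^ K * r := fun j hj => by gcongr
  have hT1 : (T : ℝ)⁻¹ ≤ 1 := Nat.cast_inv_le_one T
  calc φ (closedBall x ((T + 1) ^ (k + 1) * r)) ^ (1 - (T : ℝ)⁻¹)
      ≤ ((c * ((T + 1) ^ (k + 1) * r)) ^ β) ^ (1 - (T : ℝ)⁻¹) :=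
        Real.rpow_le_rpow (hφ.nonneg _)
          (hballs _ (le_mul_of_one_le_left hr.le (one_le_pow₀ hone)) (hle _ hk) x)
          (sub_nonneg.2 hT1)
    _ = (c * (T + 1) * ((T + 1) ^ k * r)) ^ (β * (1 - (T : ℝ)⁻¹)) := by
        rw [← Real.rpow_mul (by positivity), pow_succ']
        ring_nf
    _ ≤ ((T + 1) ^ k * r) ^ α := hscale _ (by positivity) (hle k hk.le)

lemma IsSubmeasure.exists_isExpandingAbove [Finite X] (hφ : IsSubmeasure φ) {T : ℕ}
    (hT : T ≠ 0) {α r : ℝ} (hr : 0 < r) (hα : 0 ≤ α) {K : ℕ}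
    (hgrowth : ∀ k < K, ∀ x,
      φ (closedBall x ((T + 1) ^ (k + 1) * r)) ^ (1 - (T : ℝ)⁻¹) ≤ ((T + 1) ^ k * r) ^ α)
    (hpos : 0 < φ univ) :
    ∃ x : ℝ → X, IsExpandingAbove ((T + 1) ^ α) α (r ^ α) x
      (Ico 0 (min (((T + 1) ^ K * r) ^ α) (φ univ ^ (1 - (T : ℝ)⁻¹)))) := by
  have : Nonempty X := by
    by_contra! hX
    exact hpos.ne' (univ_eq_empty_iff.2 hX ▸ hφ.empty)
  set a := min (((T + 1) ^ K * r) ^ α) (φ univ ^ (1 - (T : ℝ)⁻¹))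
  have ha : a * φ univ ^ (T⁻¹ : ℝ) ≤ φ univ :=
    calc a * φ univ ^ (T⁻¹ : ℝ) ≤ φ univ ^ (1 - (T : ℝ)⁻¹) * φ univ ^ (T⁻¹ : ℝ) := by
          gcongr
          exact min_le_right _ _
      _ = φ univ := by rw [← Real.rpow_add hpos, sub_add_cancel, Real.rpow_one]
  obtain ⟨x, -, hx⟩ := hasExpandingCurves_pow_mul hφ hT hr hα hgrowth univ (φ univ) a hpos
    (fun _ _ => hφ.mono (subset_univ _)) (min_le_left _ _) ha
  exact ⟨x, hx⟩

end FiniteSpaces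

section HausdorffContent

/-- The size-`δ` approximation of the `β`-dimensional Hausdorff measure: the largest outer measure
with `μ A ≤ ediam A ^ β` for all sets `A` of diameter at most `δ`. -/
noncomputable def hausdorffContent (X : Type*) [EMetricSpace X] (β : ℝ) (δ : ℝ≥0∞) :
    OuterMeasure X :=
  OuterMeasure.mkMetric'.pre (fun A => ediam A ^ β) δ

lemma hausdorffContent_le_ediam_rpow {X : Type*} [EMetricSpace X] {β : ℝ} {δ : ℝ≥0∞} {A : Set X}
    (hA : ediam A ≤ δ) : hausdorffContent X β δ A ≤ ediam A ^ β :=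
  OuterMeasure.mkMetric'.pre_le hA

lemma exists_hausdorffContent_ne_zero {X : Type*} [EMetricSpace X] {β : ℝ≥0} {A : Set X}
    (hA : (β : ℝ≥0∞) < dimH A) :
    ∃ δ : ℝ, 0 < δ ∧ hausdorffContent X β (ENNReal.ofReal δ) A ≠ 0 := by
  borelize X
  have hmkMetric : OuterMeasure.mkMetric' (fun B : Set X => ediam B ^ (β : ℝ)) A = ∞ := by
    rw [← hausdorffMeasure_of_lt_dimH hA, Measure.hausdorffMeasure, ← Measure.coe_toOuterMeasure,
      Measure.mkMetric_toOuterMeasure, OuterMeasure.mkMetric]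
  have hlim := OuterMeasure.mkMetric'.tendsto_pre_nat (fun B : Set X => ediam B ^ (β : ℝ)) A
  rw [hmkMetric] at hlim
  obtain ⟨N, hN, hN0⟩ :=
    ((hlim.eventually_ne ENNReal.top_ne_zero).and (eventually_gt_atTop 0)).exists
  have hN0' : (0 : ℝ) < N := mod_cast hN0
  refine ⟨(N : ℝ)⁻¹, inv_pos.2 hN0', ?_⟩
  rwa [ENNReal.ofReal_inv_of_pos hN0', ENNReal.ofReal_natCast]

lemma hausdorffContent_ne_top {X : Type*} [EMetricSpace X] {β : ℝ} (hβ : 0 ≤ β) {δ : ℝ≥0∞}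
    (hδ : 0 < δ) {A : Set X} (hA : TotallyBounded A) : hausdorffContent X β δ A ≠ ∞ := by
  obtain ⟨η, hη, hηδ⟩ : ∃ η : ℝ≥0∞, 0 < η ∧ 2 * η ≤ min δ 1 :=
    ⟨min δ 1 / 2, ENNReal.div_pos (lt_min hδ one_pos).ne' ENNReal.ofNat_ne_top,
      (ENNReal.mul_div_cancel two_ne_zero ENNReal.ofNat_ne_top).le⟩
  have hball : ∀ x : X, ediam (eball x η) ≤ min δ 1 := fun x => ediam_eball_le.trans hηδ
  obtain ⟨t, ht, hcover⟩ := EMetric.totallyBounded_iff.1 hA η hη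
  refine ne_top_of_le_ne_top ?_ ((measure_mono hcover).trans (measure_biUnion_le _ ht.countable _))
  have := ht.fintype
  rw [tsum_fintype]
  refine ENNReal.sum_ne_top.2 fun x _ => ne_top_of_le_ne_top ?_
    (hausdorffContent_le_ediam_rpow ((hball x).trans (min_le_left _ _)))
  exact ENNReal.rpow_ne_top_of_nonneg hβ
    (ne_top_of_le_ne_top ENNReal.one_ne_top ((hball x).trans (min_le_right _ _)))

variable {X : Type*} [MetricSpace X] {β δ ρ : ℝ}

lemma hausdorffContent_closedBall_le (hβ : 0 ≤ β) (hρ : 0 ≤ ρ) (hρδ : 2 * ρ ≤ δ) (x : X) :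
    hausdorffContent X β (ENNReal.ofReal δ) (closedBall x ρ) ≤ ENNReal.ofReal ((2 * ρ) ^ β) := by
  have hdiam : ediam (closedBall x ρ) ≤ ENNReal.ofReal (2 * ρ) := by
    rw [← closedEBall_ofReal hρ, ENNReal.ofReal_mul zero_le_two, ENNReal.ofReal_ofNat]
    exact ediam_closedEBall_le
  rw [← ENNReal.ofReal_rpow_of_nonneg (by positivity) hβ]
  exact (hausdorffContent_le_ediam_rpow (hdiam.trans (ENNReal.ofReal_le_ofReal hρδ))).trans
    (ENNReal.rpow_le_rpow hdiam hβ)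

lemma map_hausdorffContent_closedBall_le (hβ : 0 ≤ β) {t : Set X} {π : X → t} {r : ℝ}
    (hπ : ∀ z, dist z (π z : X) ≤ r) (hrρ : r ≤ ρ) (hρ : 0 ≤ ρ) (hρδ : 4 * ρ ≤ δ) (x : t) :
    OuterMeasure.map π (hausdorffContent X β (ENNReal.ofReal δ)) (closedBall x ρ) ≤
      ENNReal.ofReal ((4 * ρ) ^ β) := by
  have hsub : π ⁻¹' closedBall x ρ ⊆ closedBall (x : X) (2 * ρ) := fun z hz => by
    have hzx : dist (π z : X) x ≤ ρ := hz
    rw [mem_closedBall]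
    linarith [dist_triangle z (π z) x, hπ z]
  calc OuterMeasure.map π (hausdorffContent X β (ENNReal.ofReal δ)) (closedBall x ρ)
      ≤ hausdorffContent X β (ENNReal.ofReal δ) (closedBall (x : X) (2 * ρ)) := measure_mono hsub
    _ ≤ ENNReal.ofReal ((2 * (2 * ρ)) ^ β) :=
        hausdorffContent_closedBall_le hβ (by linarith) (by linarith) _
    _ = ENNReal.ofReal ((4 * ρ) ^ β) := by ring_nf

end HausdorffContent

section CompactSpaces

lemma exists_finite_net_map (X : Type*) [PseudoMetricSpace X] [CompactSpace X] {r : ℝ}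
    (hr : 0 < r) : ∃ (t : Set X) (π : X → t), t.Finite ∧ ∀ z, dist z (π z : X) < r := by
  obtain ⟨t, -, ht, hcover⟩ := (isCompact_univ (X := X)).finite_cover_balls hr
  have hnear : ∀ z, ∃ y : t, dist z (y : X) < r := fun z => by
    simpa using! hcover (mem_univ z)
  choose π hπ using hnear
  exact ⟨t, π, ht, hπ⟩

lemma exists_pos_forall_mul_rpow_le {c α p : ℝ} (hc : 0 < c) (hαp : α < p) :
    ∃ R > 0, ∀ s, 0 < s → s ≤ R → (c * s) ^ p ≤ s ^ α := by
  have hgap : 0 < p - α := sub_pos.2 hαp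
  refine ⟨((c ^ p)⁻¹) ^ (p - α)⁻¹, by positivity, fun s hs hsR => ?_⟩
  have hpow : s ^ (p - α) ≤ (c ^ p)⁻¹ :=
    (Real.le_rpow_inv_iff_of_pos hs.le (by positivity) hgap).1 hsR
  calc (c * s) ^ p = c ^ p * (s ^ (p - α) * s ^ α) := by
        rw [Real.mul_rpow hc.le hs.le, ← Real.rpow_add hs, sub_add_cancel]
    _ ≤ c ^ p * ((c ^ p)⁻¹ * s ^ α) := by gcongr
    _ = s ^ α := mul_inv_cancel_left₀ (by positivity) _

lemma exists_nat_lt_mul_one_sub_inv {α β : ℝ} (hαβ : α < β) :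
    ∃ T : ℕ, T ≠ 0 ∧ α < β * (1 - (T : ℝ)⁻¹) := by
  have hlim : Tendsto (fun T : ℕ => β * (1 - (T : ℝ)⁻¹)) atTop (𝓝 β) := by
    simpa using (tendsto_inv_atTop_nhds_zero_nat (𝕜 := ℝ)).const_sub 1 |>.const_mul β
  exact ((eventually_ne_atTop 0).and (hlim.eventually_const_lt hαβ)).exists

lemma exists_div_pow_rpow_le {τ α ε : ℝ} (R : ℝ) (hτ : 1 < τ) (hα : 0 < α) (hε : 0 < ε) :
    ∃ K : ℕ, (R / τ ^ K) ^ α ≤ ε := by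
  have hlim : Tendsto (fun K : ℕ => (R / τ ^ K) ^ α) atTop (𝓝 0) := by
    simpa [Real.zero_rpow hα.ne'] using
      ((tendsto_pow_atTop_atTop_of_one_lt hτ).const_div_atTop R).rpow_const (Or.inr hα.le)
  exact (hlim.eventually_le_const hε).exists

lemma exists_isExpandingAbove_of_hausdorffContent {X : Type*} [MetricSpace X] [CompactSpace X]
    {T : ℕ} (hT : T ≠ 0) {α β δ R : ℝ} (hα : 0 ≤ α) (hβ : 0 ≤ β) (hR : 0 < R) (hRδ : 4 * R ≤ δ)
    (hscale : ∀ s, 0 < s → s ≤ R → (4 * (T + 1) * s) ^ (β * (1 - (T : ℝ)⁻¹)) ≤ s ^ α)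
    (hpos : hausdorffContent X β (ENNReal.ofReal δ) univ ≠ 0) (K : ℕ) :
    ∃ x : ℝ → X, IsExpandingAbove ((T + 1) ^ α) α ((R / (T + 1) ^ K) ^ α) x
      (Ico 0 (min (R ^ α)
        ((hausdorffContent X β (ENNReal.ofReal δ) univ).toReal ^ (1 - (T : ℝ)⁻¹)))) := by
  set μ := hausdorffContent X β (ENNReal.ofReal δ)
  set r := R / (T + 1) ^ K
  have hr : 0 < r := by positivity
  have hrK : (T + 1) ^ K * r = R := mul_div_cancel₀ R (by positivity)
  have hμ : μ univ ≠ ∞ :=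
    hausdorffContent_ne_top hβ (ENNReal.ofReal_pos.2 (by linarith)) isCompact_univ.totallyBounded
  obtain ⟨t, π, ht, hπ⟩ := exists_finite_net_map X hr
  have := ht.to_subtype
  -- Pushing `μ` to a finite `r`-net preserves its growth on balls of radius at least `r`.
  set φ : Set t → ℝ := fun A => (OuterMeasure.map π μ A).toReal
  have hφuniv : φ univ = (μ univ).toReal := by simp [φ]
  have hφ : IsSubmeasure φ := isSubmeasure_toReal (by simpa using hμ)
  have hballs : ∀ ρ, r ≤ ρ → ρ ≤ (T + 1) ^ K * r → ∀ x, φ (closedBall x ρ) ≤ (4 * ρ) ^ β := by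
    rw [hrK]
    exact fun ρ hrρ hρR x => ENNReal.toReal_le_of_le_ofReal (Real.rpow_nonneg (by linarith) β)
      (map_hausdorffContent_closedBall_le hβ (fun z => (hπ z).le) hrρ (by linarith) (by linarith) x)
  have hgrowth : ∀ k < K, ∀ x,
      φ (closedBall x ((T + 1) ^ (k + 1) * r)) ^ (1 - (T : ℝ)⁻¹) ≤ ((T + 1) ^ k * r) ^ α :=
    fun k hk => hφ.closedBall_pow_succ_mul_rpow_le hr (by norm_num) hballs (hrK ▸ hscale) hk
  obtain ⟨x, hx⟩ := hφ.exists_isExpandingAbove hT hr hα hgrowth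
    (hφuniv ▸ ENNReal.toReal_pos hpos hμ)
  rw [hrK, hφuniv] at hx
  exact ⟨fun u => x u, hx⟩

lemma exists_forall_isExpandingAbove {X : Type*} [MetricSpace X] [CompactSpace X] {α : ℝ≥0}
    (hα : 0 < α) (hdim : (α : ℝ≥0∞) < dimH (univ : Set X)) :
    ∃ a > 0, ∃ C > 0, ∀ ε > 0, ∃ x : ℝ → X, IsExpandingAbove C α ε x (Ico 0 a) := by
  obtain ⟨β, hαβ, hβ⟩ := ENNReal.lt_iff_exists_nnreal_btwn.1 hdim
  obtain ⟨δ, hδ, hpos⟩ := exists_hausdorffContent_ne_zero hβ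
  obtain ⟨T, hT, hTα⟩ := exists_nat_lt_mul_one_sub_inv
    (NNReal.coe_lt_coe.2 (ENNReal.coe_lt_coe.1 hαβ))
  obtain ⟨R, hR, hscale⟩ := exists_pos_forall_mul_rpow_le (c := 4 * (T + 1)) (by positivity) hTα
  set m := (hausdorffContent X β (ENNReal.ofReal δ) univ).toReal
  have hm : 0 < m :=
    ENNReal.toReal_pos hpos (hausdorffContent_ne_top β.2 (ENNReal.ofReal_pos.2 hδ)
      isCompact_univ.totallyBounded)
  refine ⟨min (min R (δ / 4) ^ (α : ℝ)) (m ^ (1 - (T : ℝ)⁻¹)), by positivity,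
    (T + 1) ^ (α : ℝ), by positivity, fun ε hε => ?_⟩
  obtain ⟨K, hK⟩ := exists_div_pow_rpow_le (min R (δ / 4)) (τ := T + 1)
    (by simpa using Nat.pos_of_ne_zero hT) (NNReal.coe_pos.2 hα) hε
  obtain ⟨x, hx⟩ := exists_isExpandingAbove_of_hausdorffContent hT α.2 β.2
    (by positivity : 0 < min R (δ / 4)) (by linarith [min_le_right R (δ / 4)])
    (fun s hs hsR => hscale s hs (hsR.trans (min_le_left _ _))) hpos K
  exact ⟨x, fun u hu v hv huv => hx u hu v hv (hK.trans_lt huv)⟩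

lemma exists_isExpandingAbove_zero {X : Type*} [PseudoMetricSpace X] [CompactSpace X]
    {C α : ℝ} (hα : 0 ≤ α) {I : Set ℝ} (h : ∀ ε > 0, ∃ x : ℝ → X, IsExpandingAbove C α ε x I) :
    ∃ x : ℝ → X, IsExpandingAbove C α 0 x I := by
  choose x hx using fun N : ℕ => h (1 / ((N : ℝ) + 1)) (by positivity)
  let U : Ultrafilter ℕ := hyperfilter ℕ
  obtain ⟨y, hy⟩ : ∃ y, Tendsto x U (𝓝 y) := ⟨_, (U.map x).le_nhds_lim⟩
  rw [tendsto_pi_nhds] at hy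
  refine ⟨y, fun u hu v hv huv => ?_⟩
  have hlim : Tendsto (fun N => C * dist (x N u) (x N v) ^ α) U
      (𝓝 (C * dist (y u) (y v) ^ α)) :=
    (((hy u).dist (hy v)).rpow_const (Or.inr hα)).const_mul C
  have hsmall : ∀ᶠ N : ℕ in U, 1 / ((N : ℝ) + 1) < v - u :=
    Nat.hyperfilter_le_atTop (tendsto_one_div_add_atTop_nhds_zero_nat.eventually_lt_const huv)
  exact ge_of_tendsto hlim (hsmall.mono fun N hN => hx N u hu v hv hN)

end CompactSpaces

section Cube

/-- The value `∑ cₖ lᵏ` of a sequence of digits below `N`, for a real ratio `l`. When `N * l < 1`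
these values form a self-similar Cantor set and determine the digits. -/
noncomputable def digitSeries {N : ℕ} (l : ℝ) (c : ℕ → Fin N) : ℝ :=
  ∑' k, (c k : ℝ) * l ^ k

section digitSeries

variable {N : ℕ} {l : ℝ}

lemma digit_le (i : Fin N) : (i : ℝ) ≤ N - 1 := by
  have : (i : ℝ) + 1 ≤ N := mod_cast i.2
  linarith

lemma one_le_abs_digit_sub {i j : Fin N} (hij : i ≠ j) : 1 ≤ |(i : ℝ) - j| := by
  have : (1 : ℤ) ≤ |((i : ℕ) : ℤ) - (j : ℕ)| :=
    Int.one_le_abs (sub_ne_zero.2 fun h => hij (Fin.ext (mod_cast h)))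
  exact mod_cast this

lemma summable_digitSeries (hl : 0 ≤ l) (hl1 : l < 1) (c : ℕ → Fin N) :
    Summable fun k => (c k : ℝ) * l ^ k :=
  .of_nonneg_of_le (fun k => by positivity)
    (fun k => mul_le_mul_of_nonneg_right (digit_le (c k)) (by positivity))
    ((summable_geometric_of_lt_one hl hl1).mul_left _)

lemma digitSeries_nonneg (hl : 0 ≤ l) (c : ℕ → Fin N) : 0 ≤ digitSeries l c :=
  tsum_nonneg fun k => by positivity

lemma digitSeries_le (hl : 0 ≤ l) (hl1 : l < 1) (c : ℕ → Fin N) :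
    digitSeries l c ≤ (N - 1) / (1 - l) := by
  rw [div_eq_mul_inv, ← tsum_geometric_of_lt_one hl hl1, ← tsum_mul_left]
  exact (summable_digitSeries hl hl1 c).tsum_le_tsum
    (fun k => mul_le_mul_of_nonneg_right (digit_le (c k)) (by positivity))
    ((summable_geometric_of_lt_one hl hl1).mul_left _)

lemma digitSeries_eq_sum_add (hl : 0 ≤ l) (hl1 : l < 1) (c : ℕ → Fin N) (k : ℕ) :
    digitSeries l c = ∑ j ∈ Finset.range k, (c j : ℝ) * l ^ j +
      l ^ k * digitSeries l fun j => c (j + k) := by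
  rw [digitSeries, ← (summable_digitSeries hl hl1 c).sum_add_tsum_nat_add k, digitSeries,
    ← tsum_mul_left]
  simp only [pow_add]
  congr! 3
  ring

lemma pow_mul_le_abs_digitSeries_sub (hl : 0 ≤ l) (hl1 : l < 1) {c c' : ℕ → Fin N} {k : ℕ}
    (hk : c k ≠ c' k) (hlt : ∀ j < k, c j = c' j) :
    l ^ k * ((1 - N * l) / (1 - l)) ≤ |digitSeries l c - digitSeries l c'| := by
  set s := digitSeries l fun j => c (j + (k + 1))
  set s' := digitSeries l fun j => c' (j + (k + 1))
  have hprefix :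
      ∑ j ∈ Finset.range k, (c j : ℝ) * l ^ j = ∑ j ∈ Finset.range k, (c' j : ℝ) * l ^ j :=
    Finset.sum_congr rfl fun j hj => by rw [hlt j (Finset.mem_range.1 hj)]
  have hsub : digitSeries l c - digitSeries l c' = l ^ k * (((c k : ℝ) - c' k) - l * (s' - s)) := by
    rw [digitSeries_eq_sum_add hl hl1 c (k + 1), digitSeries_eq_sum_add hl hl1 c' (k + 1),
      Finset.sum_range_succ, Finset.sum_range_succ, hprefix]
    ring
  have htail : |s' - s| ≤ (N - 1) / (1 - l) :=
    (abs_sub_le_of_nonneg_of_le (digitSeries_nonneg hl _) (digitSeries_le hl hl1 _)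
      (digitSeries_nonneg hl _) (digitSeries_le hl hl1 _))
  rw [hsub, abs_mul, abs_of_nonneg (pow_nonneg hl k)]
  gcongr
  calc (1 - N * l) / (1 - l) = 1 - l * ((N - 1) / (1 - l)) := by
        have : 1 - l ≠ 0 := (sub_pos.2 hl1).ne'
        field_simp
        ring
    _ ≤ |(c k : ℝ) - c' k| - |l * (s' - s)| := by
        rw [abs_mul, abs_of_nonneg hl]
        gcongr
        exact one_le_abs_digit_sub hk
    _ ≤ |((c k : ℝ) - c' k) - l * (s' - s)| := abs_sub_abs_le_abs_sub _ _

end digitSeries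

lemma exists_cube_digits (n : ℕ) {b : ℕ} (hb : 1 < b) :
    ∃ c : (Fin n → ℝ) → ℕ → Fin (b ^ n), ∀ q ∈ Icc 0 1, ∀ q' ∈ Icc 0 1, ∀ k,
      (∀ j < k, c q j = c q' j) → dist q q' ≤ ((b : ℝ) ^ k)⁻¹ := by
  have : NeZero b := ⟨by omega⟩
  have hdigits : ∀ s ∈ Icc (0 : ℝ) 1, ∃ d : ℕ → Fin b, Real.ofDigits d = s := fun s hs =>
    (Real.ofDigits_SurjOn hb hs).imp fun _ => And.right
  choose! d hd using hdigits
  refine ⟨fun q k => finFunctionFinEquiv fun i => d (q i) k, fun q hq q' hq' k hagree => ?_⟩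
  refine (dist_pi_le_iff (by positivity)).2 fun i => ?_
  rw [← hd _ ⟨hq.1 i, hq.2 i⟩, ← hd _ ⟨hq'.1 i, hq'.2 i⟩, Real.dist_eq]
  exact Real.abs_ofDigits_sub_ofDigits_le fun j hj =>
    congrFun (finFunctionFinEquiv.injective (hagree j hj)) i

-- Points agreeing in their first `k` binary digits have distance at most `2 ^ (-k)`, whose `α`-th
-- power is `(2 ^ (-α)) ^ k`; as `n < α`, this ratio is below `1 / 2 ^ n` and the series separates
-- digits.
lemma exists_dist_rpow_le_mul_abs_digitSeries_sub {n : ℕ} {α : ℝ} (hα : (n : ℝ) < α) :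
    ∃ c : (Fin n → ℝ) → ℕ → Fin (2 ^ n), ∃ D > 0, ∀ q ∈ Icc 0 1, ∀ q' ∈ Icc 0 1,
      dist q q' ^ α ≤ D * |digitSeries (2 ^ (-α)) (c q) - digitSeries (2 ^ (-α)) (c q')| := by
  have hα0 : 0 < α := n.cast_nonneg.trans_lt hα
  set l : ℝ := 2 ^ (-α) with hl
  have hl1 : l < 1 := Real.rpow_lt_one_of_one_lt_of_neg one_lt_two (neg_lt_zero.2 hα0)
  have hnl : ((2 ^ n : ℕ) : ℝ) * l < 1 := by
    rw [hl, Nat.cast_pow, Nat.cast_ofNat, ← Real.rpow_natCast, ← Real.rpow_add two_pos]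
    exact Real.rpow_lt_one_of_one_lt_of_neg one_lt_two (by linarith)
  have hgap : 0 < (1 - ((2 ^ n : ℕ) : ℝ) * l) / (1 - l) := div_pos (by linarith) (by linarith)
  obtain ⟨c, hc⟩ := exists_cube_digits n one_lt_two
  refine ⟨c, ((1 - ((2 ^ n : ℕ) : ℝ) * l) / (1 - l))⁻¹, inv_pos.2 hgap, fun q hq q' hq' => ?_⟩
  have hpow : ∀ k, (∀ j < k, c q j = c q' j) → dist q q' ^ α ≤ l ^ k := fun k hk =>
    calc dist q q' ^ α ≤ (((2 : ℝ) ^ k)⁻¹) ^ α := by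
          gcongr
          exact hc q hq q' hq' k hk
      _ = l ^ k := by
          rw [hl, ← inv_pow, ← Real.rpow_pow_comm (by positivity), Real.inv_rpow zero_le_two,
            Real.rpow_neg zero_le_two]
  by_cases heq : ∀ k, c q k = c q' k
  · have hzero : dist q q' ^ α ≤ 0 :=
      ge_of_tendsto' (tendsto_pow_atTop_nhds_zero_of_lt_one (by positivity) hl1)
        fun k => hpow k fun j _ => heq j
    exact hzero.trans (by positivity)
  · push Not at heq
    have hlt : ∀ j < Nat.find heq, c q j = c q' j := fun j hj => not_not.1 (Nat.find_min heq hj)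
    rw [← div_eq_inv_mul, le_div_iff₀ hgap]
    exact (mul_le_mul_of_nonneg_right (hpow _ hlt) hgap.le).trans
      (pow_mul_le_abs_digitSeries_sub (by positivity) hl1 (Nat.find_spec heq) hlt)

lemma exists_mapsTo_Ico_dist_rpow_le {n : ℕ} {α a : ℝ} (hα : (n : ℝ) < α) (ha : 0 < a) :
    ∃ p : (Fin n → ℝ) → ℝ, (∀ q, p q ∈ Ico 0 a) ∧ ∃ D > 0, ∀ q ∈ Icc 0 1, ∀ q' ∈ Icc 0 1,
      dist q q' ^ α ≤ D * |p q - p q'| := by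
  have hl1 : (2 : ℝ) ^ (-α) < 1 :=
    Real.rpow_lt_one_of_one_lt_of_neg one_lt_two (neg_lt_zero.2 (n.cast_nonneg.trans_lt hα))
  obtain ⟨c, D, hD, hc⟩ := exists_dist_rpow_le_mul_abs_digitSeries_sub hα
  obtain ⟨B, hB0, hB⟩ : ∃ B > 0, ∀ q, digitSeries (2 ^ (-α)) (c q) < B :=
    ⟨_, (digitSeries_nonneg (by positivity) (c 0)).trans_lt
      ((digitSeries_le (by positivity) hl1 _).trans_lt (lt_add_one _)),
      fun q => (digitSeries_le (by positivity) hl1 _).trans_lt (lt_add_one _)⟩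
  refine ⟨fun q => a / B * digitSeries (2 ^ (-α)) (c q), fun q =>
    ⟨mul_nonneg (by positivity) (digitSeries_nonneg (by positivity) _), ?_⟩,
    D / (a / B), by positivity, fun q hq q' hq' => ?_⟩
  · calc a / B * digitSeries (2 ^ (-α)) (c q) < a / B * B := by
          gcongr
          exact hB q
      _ = a := div_mul_cancel₀ a hB0.ne'
  · rw [← mul_sub, abs_mul, abs_of_pos (by positivity), ← mul_assoc,
      div_mul_cancel₀ D (by positivity)]
    exact hc q hq q' hq'

end Cube

lemma IsExpandingAbove.abs_sub_le {X : Type*} [PseudoMetricSpace X] {C α : ℝ} {x : ℝ → X}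
    {I : Set ℝ} (hx : IsExpandingAbove C α 0 x I) (hC : 0 ≤ C) {u v : ℝ} (hu : u ∈ I)
    (hv : v ∈ I) : |u - v| ≤ C * dist (x u) (x v) ^ α := by
  rcases lt_trichotomy u v with huv | rfl | huv
  · rw [abs_sub_comm, abs_of_pos (sub_pos.2 huv)]
    exact hx u hu v hv (sub_pos.2 huv)
  · rw [sub_self, abs_zero]
    positivity
  · rw [abs_of_pos (sub_pos.2 huv), dist_comm]
    exact hx v hv u hu (sub_pos.2 huv)

lemma exists_antilipschitzWith_cube {n : ℕ} {X : Type*} [MetricSpace X] [CompactSpace X]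
    (hdim : (n : ℝ≥0∞) < dimH (univ : Set X)) :
    ∃ (K : ℝ≥0) (y : (Fin n → ℝ) → X), AntilipschitzWith K ((Icc 0 1).domRestrict y) := by
  obtain ⟨α, hnα, hαdim⟩ := ENNReal.lt_iff_exists_nnreal_btwn.1 hdim
  have hnα' : (n : ℝ) < α := mod_cast hnα
  have hα : (0 : ℝ) < α := n.cast_nonneg.trans_lt hnα'
  obtain ⟨a, ha, C, hC, happrox⟩ := exists_forall_isExpandingAbove (NNReal.coe_pos.1 hα) hαdim
  obtain ⟨x, hx⟩ := exists_isExpandingAbove_zero hα.le happrox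
  obtain ⟨p, hpa, D, hD, hp⟩ := exists_mapsTo_Ico_dist_rpow_le hnα' ha
  refine ⟨((D * C) ^ (α : ℝ)⁻¹).toNNReal, x ∘ p,
    AntilipschitzWith.of_le_mul_dist fun ⟨q, hq⟩ ⟨q', hq'⟩ => ?_⟩
  have hholder : dist q q' ^ (α : ℝ) ≤ D * C * dist (x (p q)) (x (p q')) ^ (α : ℝ) :=
    calc dist q q' ^ (α : ℝ) ≤ D * |p q - p q'| := hp q hq q' hq'
      _ ≤ D * (C * dist (x (p q)) (x (p q')) ^ (α : ℝ)) := by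
          gcongr
          exact hx.abs_sub_le hC.le (hpa q) (hpa q')
      _ = D * C * dist (x (p q)) (x (p q')) ^ (α : ℝ) := (mul_assoc _ _ _).symm
  rw [Real.coe_toNNReal _ (by positivity), ← Real.rpow_le_rpow_iff dist_nonneg (by positivity) hα,
    Real.mul_rpow (by positivity) dist_nonneg, Real.rpow_inv_rpow (by positivity) hα.ne']
  exact hholder

lemma exists_lipschitzWith_range_eq_Icc {ι X : Type*} [Fintype ι]
    [PseudoMetricSpace X] {K : ℝ≥0} {y : (ι → ℝ) → X}
    (hy : AntilipschitzWith K ((Icc 0 1).domRestrict y)) :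
    ∃ f : X → ι → ℝ, LipschitzWith K f ∧ range f = Icc 0 1 := by
  have hinj : InjOn y (Icc 0 1) := injOn_iff_injective.2 hy.injective
  have hinv : LipschitzOnWith K (Function.invFunOn y (Icc 0 1)) (y '' Icc 0 1) :=
    lipschitzOnWith_iff_restrict.2 <| hy.to_rightInvOn' (surjOn_image y _).mapsTo_invFunOn
      (surjOn_image y _).rightInvOn_invFunOn
  obtain ⟨g, hg, heq⟩ := hinv.extend_pi
  have hcoord : ∀ i, LipschitzWith K fun z => g z i := fun i => by
    simpa [Function.comp_def] using (LipschitzWith.eval i).comp hg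
  have hclamp : ∀ z i, max 0 (min 1 (g z i)) ∈ Icc (0 : ℝ) 1 := fun z i =>
    ⟨le_max_left _ _, max_le zero_le_one (min_le_left _ _)⟩
  refine ⟨fun z i => max 0 (min 1 (g z i)), ?_, Subset.antisymm ?_ fun q hq => ⟨y q, ?_⟩⟩
  · exact LipschitzWith.of_dist_le_mul fun z w => (dist_pi_le_iff (by positivity)).2 fun i =>
      (((hcoord i).const_min 1).const_max 0).dist_le_mul z w
  · rintro _ ⟨z, rfl⟩
    exact ⟨fun i => (hclamp z i).1, fun i => (hclamp z i).2⟩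
  · have hgq : g (y q) = q := by
      rw [← heq (mem_image_of_mem y hq), hinj.leftInvOn_invFunOn hq]
    ext i
    dsimp only
    rw [hgq, min_eq_right (show q i ≤ 1 from hq.2 i), max_eq_right (show 0 ≤ q i from hq.1 i)]

/-- **Keleti–Máthé–Zindulka.** Every compact metric space of Hausdorff dimension strictly
greater than `n` admits a Lipschitz map onto the cube `[0,1]ⁿ`. -/
theorem lipschitz_onto_cube (n : ℕ) (M : Type u) [MetricSpace M] [CompactSpace M]
    (hdim : (n : ℝ≥0∞) < dimH (Set.univ : Set M)) :
    ∃ (f : M → EuclideanSpace ℝ (Fin n)) (L : ℝ), 0 < L ∧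
      (∀ x y : M, ‖f x - f y‖ ≤ L * dist x y) ∧
      Set.range f = {z : EuclideanSpace ℝ (Fin n) | ∀ i, z i ∈ Set.Icc (0 : ℝ) 1} := by
  obtain ⟨K, y, hy⟩ := exists_antilipschitzWith_cube hdim
  obtain ⟨g, hg, hrange⟩ := exists_lipschitzWith_range_eq_Icc hy
  obtain ⟨L, hL⟩ : ∃ L, LipschitzWith L (WithLp.toLp 2 ∘ g : M → EuclideanSpace ℝ (Fin n)) :=
    ⟨_, (PiLp.lipschitzWith_toLp 2 fun _ : Fin n => ℝ).comp hg⟩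
  refine ⟨WithLp.toLp 2 ∘ g, L + 1, by positivity, fun x y => ?_, ?_⟩
  · rw [← dist_eq_norm]
    exact (hL.dist_le_mul x y).trans (by gcongr; exact (lt_add_one _).le)
  · rw [range_comp, hrange]
    refine Subset.antisymm ?_ fun z hz =>
      ⟨WithLp.ofLp z, ⟨fun i => (hz i).1, fun i => (hz i).2⟩, rfl⟩
    rintro _ ⟨q, hq, rfl⟩
    exact fun i => ⟨hq.1 i, hq.2 i⟩
end

section
/- Let (X,d_X) be a finite metric space, let S ⊆ X, and let D ≥ 1. Suppose ρ_0 : S × S → [0,∞) is an ultrametric on S satisfying d_X(x,y) ≤ ρ_0(x,y) ≤ D d_X(x,y) for all x,y ∈ S. Then there exists an ultrametric ρ : X × X → [0,∞) such that: ρ(x,y) = ρ_0(x,y) for all x,y ∈ S; ρ(x,y) ≥ d_X(x,y)/3 for every x,y ∈ X; and ρ(x,y) ≤ 2D d_X(x,y) for every x ∈ X and y ∈ S. -/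
universe u

/-- `d` is a metric on `A`. -/
def IsMetricOn {A : Type*} (d : A → A → ℝ) : Prop :=
  (∀ x y, 0 ≤ d x y) ∧ (∀ x y, d x y = 0 ↔ x = y) ∧ (∀ x y, d x y = d y x) ∧
    ∀ x y z, d x z ≤ d x y + d y z

/-- `ρ` is an ultrametric on `A`. -/
def IsUltrametricOn {A : Type*} (ρ : A → A → ℝ) : Prop :=
  IsMetricOn ρ ∧ ∀ x y z, ρ x z ≤ max (ρ x y) (ρ y z)

/-!
Join two points `x` and `y` of `X` by routes `x → s → t → y` with `s, t ∈ S`, give the middle leg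
the length `ρ₀ s t` and the outer legs `2 * D` times their length in `X`, and let `ρ x y` be the
infimum over all routes of the longest leg. Two routes `x → s → t → y` and `y → s' → t' → z` can be
concatenated to `x → s → t' → z`, because
`ρ₀ t s' ≤ D * (dist t y + dist y s') ≤ max (2 * D * dist y t) (2 * D * dist y s')`;
this gives the strong triangle inequality and is where the factor `2` comes from. The
infimum is positive at `(x, x)` for `x` outside the closure of `S`, so the diagonal is reset to `0`.
-/

theorem IsUltrametricOn.nonneg {A : Type*} {ρ : A → A → ℝ} (hρ : IsUltrametricOn ρ) (x y : A) :
    0 ≤ ρ x y :=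
  hρ.1.1 x y

theorem IsUltrametricOn.self_eq_zero {A : Type*} {ρ : A → A → ℝ} (hρ : IsUltrametricOn ρ) (x : A) :
    ρ x x = 0 :=
  (hρ.1.2.1 x x).2 rfl

theorem IsUltrametricOn.comm {A : Type*} {ρ : A → A → ℝ} (hρ : IsUltrametricOn ρ) (x y : A) :
    ρ x y = ρ y x :=
  hρ.1.2.2.1 x y

theorem IsUltrametricOn.le_max {A : Type*} {ρ : A → A → ℝ} (hρ : IsUltrametricOn ρ) (x y z : A) :
    ρ x z ≤ max (ρ x y) (ρ y z) :=
  hρ.2 x y z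

theorem isUltrametricOn_zero {A : Type*} [Subsingleton A] :
    IsUltrametricOn (fun _ _ : A => (0 : ℝ)) := by
  simp [IsUltrametricOn, IsMetricOn, eq_iff_true_of_subsingleton]

section ZeroOnDiag

variable {X : Type*} [DecidableEq X] {f : X → X → ℝ}

/-- The kernel `f` with its diagonal values replaced by `0`, which turns a kernel that is positive
off the diagonal into a candidate for a metric. -/
def zeroOnDiag (f : X → X → ℝ) (x y : X) : ℝ := if x = y then 0 else f x y

@[simp]
theorem zeroOnDiag_self (f : X → X → ℝ) (x : X) : zeroOnDiag f x x = 0 := if_pos rfl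

theorem zeroOnDiag_of_ne (f : X → X → ℝ) {x y : X} (hxy : x ≠ y) : zeroOnDiag f x y = f x y :=
  if_neg hxy

theorem isUltrametricOn_zeroOnDiag (hpos : ∀ x y, x ≠ y → 0 < f x y) (hcomm : ∀ x y, f x y = f y x)
    (hmax : ∀ x y z, f x z ≤ max (f x y) (f y z)) : IsUltrametricOn (zeroOnDiag f) := by
  have hnonneg : ∀ x y, 0 ≤ zeroOnDiag f x y := fun x y => by
    unfold zeroOnDiag
    split_ifs with hxy
    exacts [le_rfl, (hpos x y hxy).le]
  have hstrong : ∀ x y z, zeroOnDiag f x z ≤ max (zeroOnDiag f x y) (zeroOnDiag f y z) := by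
    intro x y z
    rcases eq_or_ne x z with rfl | hxz
    · simpa using Or.inl (hnonneg x y)
    rcases eq_or_ne x y with rfl | hxy
    · exact le_max_right _ _
    rcases eq_or_ne y z with rfl | hyz
    · exact le_max_left _ _
    simpa only [zeroOnDiag_of_ne f, hxz, hxy, hyz, ne_eq, not_false_eq_true] using hmax x y z
  refine ⟨⟨hnonneg, fun x y => ⟨fun hzero => ?_, ?_⟩, fun x y => ?_, fun x y z => ?_⟩, hstrong⟩
  · by_contra hxy
    exact (hpos x y hxy).ne' (zeroOnDiag_of_ne f hxy ▸ hzero)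
  · rintro rfl
    exact zeroOnDiag_self f x
  · simp only [zeroOnDiag, eq_comm (a := x), hcomm x]
  · exact (hstrong x y z).trans (max_le_add_of_nonneg (hnonneg x y) (hnonneg y z))

end ZeroOnDiag

section RouteCost

variable {X ι : Type*} {w : X → ι → ℝ} {ρ : ι → ι → ℝ}

/-- The longest leg of the route `x → i → j → y`, where `w` measures the outer legs and `ρ` the
middle one; the pair `p` is `(i, j)`. -/
def routeCost (w : X → ι → ℝ) (ρ : ι → ι → ℝ) (x y : X) (p : ι × ι) : ℝ :=
  max (max (w x p.1) (w y p.2)) (ρ p.1 p.2)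

/-- The bottleneck distance from `x` to `y` along routes through `ι`; off the diagonal this is the
extended ultrametric. It is the junk value `0` if `ι` is empty. -/
noncomputable def minRouteCost (w : X → ι → ℝ) (ρ : ι → ι → ℝ) (x y : X) : ℝ :=
  ⨅ p, routeCost w ρ x y p

theorem first_le_routeCost (x y : X) (p : ι × ι) : w x p.1 ≤ routeCost w ρ x y p :=
  le_max_of_le_left (le_max_left _ _)

theorem last_le_routeCost (x y : X) (p : ι × ι) : w y p.2 ≤ routeCost w ρ x y p :=
  le_max_of_le_left (le_max_right _ _)

theorem middle_le_routeCost (x y : X) (p : ι × ι) : ρ p.1 p.2 ≤ routeCost w ρ x y p :=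
  le_max_right _ _

theorem routeCost_nonneg (hρ : IsUltrametricOn ρ) (x y : X) (p : ι × ι) :
    0 ≤ routeCost w ρ x y p :=
  (hρ.nonneg p.1 p.2).trans (middle_le_routeCost x y p)

theorem minRouteCost_le_routeCost (hρ : IsUltrametricOn ρ) (x y : X) (p : ι × ι) :
    minRouteCost w ρ x y ≤ routeCost w ρ x y p :=
  ciInf_le ⟨0, Set.forall_mem_range.2 (routeCost_nonneg hρ x y)⟩ p

theorem minRouteCost_comm (hρ : IsUltrametricOn ρ) (x y : X) :
    minRouteCost w ρ x y = minRouteCost w ρ y x :=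
  (Equiv.prodComm ι ι).iInf_congr fun p => by
    simp only [routeCost, Equiv.prodComm_apply, Prod.fst_swap, Prod.snd_swap, hρ.comm p.2,
      max_comm (w y p.2)]

theorem routeCost_concat_le (hρ : IsUltrametricOn ρ) (hw : ∀ x i j, ρ i j ≤ max (w x i) (w x j))
    (x y z : X) (p q : ι × ι) :
    routeCost w ρ x z (p.1, q.2) ≤ max (routeCost w ρ x y p) (routeCost w ρ y z q) := by
  have hmid : ρ p.1 q.2 ≤ max (routeCost w ρ x y p) (routeCost w ρ y z q) :=
    calc ρ p.1 q.2 ≤ max (ρ p.1 p.2) (ρ p.2 q.2) := hρ.le_max _ _ _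
      _ ≤ max (ρ p.1 p.2) (max (ρ p.2 q.1) (ρ q.1 q.2)) := max_le_max_left _ (hρ.le_max _ _ _)
      _ ≤ max (ρ p.1 p.2) (max (max (w y p.2) (w y q.1)) (ρ q.1 q.2)) :=
        max_le_max_left _ (max_le_max_right _ (hw y p.2 q.1))
      _ ≤ max (routeCost w ρ x y p) (routeCost w ρ y z q) :=
        max_le (le_max_of_le_left (middle_le_routeCost x y p))
          (max_le (max_le_max (last_le_routeCost x y p) (first_le_routeCost y z q))
            (le_max_of_le_right (middle_le_routeCost y z q)))
  exact max_le (max_le (le_max_of_le_left (first_le_routeCost x y p))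
    (le_max_of_le_right (last_le_routeCost y z q))) hmid

theorem minRouteCost_le_max [Nonempty ι] (hρ : IsUltrametricOn ρ)
    (hw : ∀ x i j, ρ i j ≤ max (w x i) (w x j)) (x y z : X) :
    minRouteCost w ρ x z ≤ max (minRouteCost w ρ x y) (minRouteCost w ρ y z) := by
  refine le_of_forall_gt fun r hr => ?_
  obtain ⟨p, hp⟩ := exists_lt_of_ciInf_lt ((le_max_left _ _).trans_lt hr)
  obtain ⟨q, hq⟩ := exists_lt_of_ciInf_lt ((le_max_right _ _).trans_lt hr)
  calc minRouteCost w ρ x z ≤ routeCost w ρ x z (p.1, q.2) := minRouteCost_le_routeCost hρ x z _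
    _ ≤ max (routeCost w ρ x y p) (routeCost w ρ y z q) := routeCost_concat_le hρ hw x y z p q
    _ < r := max_lt hp hq

theorem minRouteCost_le_of_eq_zero (hρ : IsUltrametricOn ρ)
    (hw : ∀ x i j, ρ i j ≤ max (w x i) (w x j)) (x : X) {y : X} {j : ι} (hy : w y j = 0) :
    minRouteCost w ρ x y ≤ w x j := by
  have hwx : 0 ≤ w x j := by simpa only [hρ.self_eq_zero, max_self] using hw x j j
  calc minRouteCost w ρ x y ≤ routeCost w ρ x y (j, j) := minRouteCost_le_routeCost hρ x y _
    _ = w x j := by simp only [routeCost, hy, hρ.self_eq_zero, max_eq_left hwx]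

theorem minRouteCost_eq_of_eq_zero (hρ : IsUltrametricOn ρ)
    (hw : ∀ x i j, ρ i j ≤ max (w x i) (w x j)) {x y : X} {i j : ι} (hx : w x i = 0)
    (hy : w y j = 0) : minRouteCost w ρ x y = ρ i j := by
  have : Nonempty ι := ⟨i⟩
  have hroute : routeCost w ρ x y (i, j) = ρ i j := by
    simp only [routeCost, hx, hy, max_self, max_eq_right (hρ.nonneg i j)]
  refine le_antisymm (hroute ▸ minRouteCost_le_routeCost hρ x y (i, j)) (le_ciInf fun p => ?_)
  have hstay {u : X} {k : ι} (hu : w u k = 0) : routeCost w ρ u u (k, k) = 0 := by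
    simp only [routeCost, hu, hρ.self_eq_zero, max_self]
  have hnonneg := routeCost_nonneg (w := w) hρ x y
  -- Prolong the route `p` at both ends by routes of cost `0`, from `i` at `x` and to `j` at `y`.
  calc ρ i j = routeCost w ρ x y (i, j) := hroute.symm
    _ ≤ max (routeCost w ρ x y (i, p.2)) (routeCost w ρ y y (j, j)) :=
      routeCost_concat_le hρ hw x y y (i, p.2) (j, j)
    _ = routeCost w ρ x y (i, p.2) := by rw [hstay hy, max_eq_left (hnonneg _)]
    _ ≤ max (routeCost w ρ x x (i, i)) (routeCost w ρ x y p) :=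
      routeCost_concat_le hρ hw x x y (i, i) p
    _ = routeCost w ρ x y p := by rw [hstay hx, max_eq_right (hnonneg _)]

end RouteCost

section Dist

variable {X : Type*} {S : Set X} {D : ℝ} {ρ₀ : S → S → ℝ}

theorem le_max_two_mul_dist_of_le_mul_dist [PseudoMetricSpace X] (hD : 0 ≤ D)
    (hup : ∀ s t : S, ρ₀ s t ≤ D * dist (s : X) t) (x : X) (s t : S) :
    ρ₀ s t ≤ max (2 * D * dist x s) (2 * D * dist x t) := by
  have htri : D * dist (s : X) t ≤ D * (dist x s + dist x t) :=
    mul_le_mul_of_nonneg_left (dist_triangle_left _ _ _) hD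
  rw [le_max_iff]
  by_contra! hlt
  linarith [hup s t]

theorem dist_half_le_minRouteCost [PseudoMetricSpace X] [Nonempty S] {w : X → S → ℝ}
    (hw : ∀ (x : X) (s : S), 2 * dist x s ≤ w x s) (hlow : ∀ s t : S, dist (s : X) t ≤ ρ₀ s t)
    (x y : X) : dist x y / 2 ≤ minRouteCost w ρ₀ x y := by
  refine le_ciInf fun p => ?_
  have hfirst : 2 * dist x p.1 ≤ routeCost w ρ₀ x y p := (hw x p.1).trans (first_le_routeCost x y p)
  have hlast : 2 * dist y p.2 ≤ routeCost w ρ₀ x y p := (hw y p.2).trans (last_le_routeCost x y p)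
  have hmiddle : dist (p.1 : X) p.2 ≤ routeCost w ρ₀ x y p :=
    (hlow p.1 p.2).trans (middle_le_routeCost x y p)
  have htri : dist x y ≤ dist x p.1 + dist (p.1 : X) p.2 + dist y p.2 :=
    dist_comm y (p.2 : X) ▸ dist_triangle4 x (p.1 : X) p.2 y
  linarith

theorem exists_ultrametric_extension_of_nonempty [MetricSpace X] (hS : S.Nonempty) (hD : 1 ≤ D)
    (hult : IsUltrametricOn ρ₀) (hlow : ∀ x y : S, dist (x : X) y ≤ ρ₀ x y)
    (hup : ∀ x y : S, ρ₀ x y ≤ D * dist (x : X) y) :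
    ∃ ρ : X → X → ℝ, IsUltrametricOn ρ ∧
      (∀ x y : S, ρ x y = ρ₀ x y) ∧
      (∀ x y : X, dist x y / 2 ≤ ρ x y) ∧
      (∀ (x : X) (y : S), ρ x y ≤ 2 * D * dist x (y : X)) := by
  classical
  have : Nonempty S := hS.to_subtype
  let w : X → S → ℝ := fun x s => 2 * D * dist x s
  have hw : ∀ x s t, ρ₀ s t ≤ max (w x s) (w x t) :=
    le_max_two_mul_dist_of_le_mul_dist (zero_le_one.trans hD) hup
  have hw_self (s : S) : w s s = 0 := by simp only [w, dist_self, mul_zero]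
  have hlower : ∀ x y, dist x y / 2 ≤ minRouteCost w ρ₀ x y :=
    dist_half_le_minRouteCost (fun _ _ => mul_le_mul_of_nonneg_right (by linarith) dist_nonneg) hlow
  refine ⟨zeroOnDiag (minRouteCost w ρ₀), isUltrametricOn_zeroOnDiag
    (fun x y hxy => (half_pos (dist_pos.2 hxy)).trans_le (hlower x y))
    (minRouteCost_comm hult) (minRouteCost_le_max hult hw), fun x y => ?_, fun x y => ?_,
    fun x y => ?_⟩
  · rcases eq_or_ne x y with rfl | hxy
    · rw [zeroOnDiag_self, hult.self_eq_zero]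
    · rw [zeroOnDiag_of_ne _ (Subtype.coe_ne_coe.2 hxy),
        minRouteCost_eq_of_eq_zero hult hw (hw_self x) (hw_self y)]
  · rcases eq_or_ne x y with rfl | hxy
    · simp
    · exact zeroOnDiag_of_ne _ hxy ▸ hlower x y
  · rcases eq_or_ne x y with rfl | hxy
    · simp
    · exact zeroOnDiag_of_ne _ hxy ▸ minRouteCost_le_of_eq_zero hult hw x (hw_self y)

end Dist

theorem ultrametric_extension_general {X : Type*} [MetricSpace X]
    (S : Set X) (D : ℝ) (hD : 1 ≤ D) (ρ₀ : S → S → ℝ) (hult : IsUltrametricOn ρ₀)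
    (hlow : ∀ x y : S, dist (x : X) (y : X) ≤ ρ₀ x y)
    (hup : ∀ x y : S, ρ₀ x y ≤ D * dist (x : X) (y : X)) :
    ∃ ρ : X → X → ℝ, IsUltrametricOn ρ ∧
      (∀ x y : S, ρ (x : X) (y : X) = ρ₀ x y) ∧
      (∀ x y : X, dist x y / 2 ≤ ρ x y) ∧
      (∀ (x : X) (y : S), ρ x (y : X) ≤ 2 * D * dist x (y : X)) := by
  rcases S.eq_empty_or_nonempty with rfl | hS
  · rcases isEmpty_or_nonempty X with hX | ⟨⟨x₀⟩⟩
    · exact ⟨fun _ _ => 0, isUltrametricOn_zero, isEmptyElim, isEmptyElim, isEmptyElim⟩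
    · -- Nothing is prescribed on `∅`, so the zero ultrametric on `{x₀}` may be extended instead.
      obtain ⟨ρ, hρ, -, hlower, -⟩ := exists_ultrametric_extension_of_nonempty
        (Set.singleton_nonempty x₀) le_rfl isUltrametricOn_zero (by simp) (by simp)
      exact ⟨ρ, hρ, isEmptyElim, hlower, fun _ => isEmptyElim⟩
  · exact exists_ultrametric_extension_of_nonempty hS hD hult hlow hup

/-- **Extension lemma for approximate ultrametrics (Mendel–Naor).** If `(X,d)` is a finite
metric space, `S ⊆ X`, `D ≥ 1`, and `ρ₀` is an ultrametric on `S` with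
`d(x,y) ≤ ρ₀(x,y) ≤ D d(x,y)` on `S`, then there is an ultrametric `ρ` on `X` extending `ρ₀`
with `ρ(x,y) ≥ d(x,y)/3` for all `x,y ∈ X` and `ρ(x,y) ≤ 2D d(x,y)` whenever `x ∈ X`, `y ∈ S`. -/
theorem ultrametric_extension {X : Type u} [MetricSpace X] [Fintype X]
    (S : Set X) (D : ℝ) (hD : 1 ≤ D) (ρ₀ : S → S → ℝ) (hult : IsUltrametricOn ρ₀)
    (hlow : ∀ x y : S, dist (x : X) (y : X) ≤ ρ₀ x y)
    (hup : ∀ x y : S, ρ₀ x y ≤ D * dist (x : X) (y : X)) :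
    ∃ ρ : X → X → ℝ, IsUltrametricOn ρ ∧
      (∀ x y : S, ρ (x : X) (y : X) = ρ₀ x y) ∧
      (∀ x y : X, dist x y / 3 ≤ ρ x y) ∧
      (∀ (x : X) (y : S), ρ x (y : X) ≤ 2 * D * dist x (y : X)) := by
  obtain ⟨ρ, hρ, hext, hlower, hupper⟩ := ultrametric_extension_general S D hD ρ₀ hult hlow hup
  exact ⟨ρ, hρ, hext, fun x y => by linarith [hlower x y, dist_nonneg (x := x) (y := y)], hupper⟩
end

section
/- There is a universal constant c > 0 such that the following holds. Let G = (V,E) be a finite connected simple graph with girth g and average degree k = 2|E|/|V| > 2, equipped with its shortest path metric d_G. Then for every map f : V → H into a real Hilbert space H and every λ, D > 0 satisfying λ d_G(x,y) ≤ ‖f(x) − f(y)‖_H ≤ D λ d_G(x,y) for all x,y ∈ V, one has D ≥ c (1 − 2/k) √g. -/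
universe u v

/-!
Let `(Z_t)` be the stationary simple random walk on `G`, started from the distribution proportional
to the degree. Real Hilbert spaces have Markov type `2` with constant `1`:
`E ‖f Z_t - f Z_0‖² ≤ t E ‖f Z_1 - f Z_0‖²`, because the averaging operator of the walk is a
self-adjoint contraction for the degree-weighted inner product. On the other hand, a vertex at
distance `r` from `x` with `2 r + 2 < g` has at most one neighbour that is not farther from `x`, so
before time `g / 2` the expected distance to the starting point grows by at least
`E (1 - 2 / deg Z_0) ≥ 1 - 2 / k` at each step. For `t` of order `g / 2`, comparing
`E d(Z_0, Z_t)² ≥ (t (1 - 2 / k))²` with the Markov type bound `t D²` gives the theorem.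
-/

section SelfAdjointContraction

variable {M : Type*} [AddCommGroup M] [Module ℝ M] {B : LinearMap.BilinForm ℝ M}
  {T : Module.End ℝ M}

theorem bilin_pow_self_sub_map_le (hT : B.IsSelfAdjoint T) (hB : B.IsSymm)
    (hcontr : ∀ x, |B x (T x)| ≤ B x x) (s : ℕ) (x : M) :
    B ((T ^ s) x) ((T ^ s) x - T ((T ^ s) x)) ≤ B x (x - T x) := by
  induction s with
  | zero => simp
  | succ s ih =>
    refine le_trans ?_ ih
    rw [pow_succ', Module.End.mul_apply]
    generalize (T ^ s) x = y
    have hnonneg : 0 ≤ B (y - T y) (y - T y) + B (y - T y) (T (y - T y)) :=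
      neg_le_iff_add_nonneg'.mp (abs_le.mp (hcontr (y - T y))).1
    have hadj : B (T y) (T y) = B y (T (T y)) := hT y (T y)
    have hsymm : B (T y) y = B y (T y) := hB.eq _ _
    simp only [map_sub, LinearMap.sub_apply] at hnonneg ⊢
    linarith

theorem bilin_pow_sub_pow_succ_le (hT : B.IsSelfAdjoint T) (hB : B.IsSymm)
    (hcontr : ∀ x, |B x (T x)| ≤ B x x) (s : ℕ) (x : M) :
    B x ((T ^ s) x) - B x ((T ^ (s + 1)) x) ≤ B x (x - T x) := by
  have henergy := bilin_pow_self_sub_map_le hT hB hcontr s x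
  rw [pow_succ', Module.End.mul_apply]
  generalize (T ^ s) x = y at henergy ⊢
  have hnonneg : 0 ≤ B (x - y) (x - y) - B (x - y) (T (x - y)) :=
    sub_nonneg.mpr (abs_le.mp (hcontr (x - y))).2
  have hadj : B (T x) y = B x (T y) := hT x y
  have hsymm : B y x = B x y := hB.eq _ _
  have hsymm' : B (T x) y = B y (T x) := hB.eq _ _
  simp only [map_sub, LinearMap.sub_apply] at hnonneg henergy ⊢
  linarith

theorem bilin_sub_pow_le_mul (hT : B.IsSelfAdjoint T) (hB : B.IsSymm)
    (hcontr : ∀ x, |B x (T x)| ≤ B x x) (t : ℕ) (x : M) :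
    B x (x - (T ^ t) x) ≤ t * B x (x - T x) := by
  induction t with
  | zero => simp
  | succ t ih =>
    have hstep := bilin_pow_sub_pow_succ_le hT hB hcontr t x
    simp only [map_sub] at ih hstep ⊢
    push_cast
    linarith

end SelfAdjointContraction

section WalkAverage

variable {V : Type*} (G : SimpleGraph V) [G.LocallyFinite]
  {E : Type*} [AddCommGroup E] [Module ℝ E] {F : Type*} [AddCommGroup F] [Module ℝ F]

/-- The averaging (transition) operator of the simple random walk on `G`. It sends every function
to one that vanishes at the isolated vertices. -/
noncomputable def walkAverage : Module.End ℝ (V → E) where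
  toFun f x := (G.degree x : ℝ)⁻¹ • ∑ y ∈ G.neighborFinset x, f y
  map_add' f h := by
    funext x
    simp [Finset.sum_add_distrib]
  map_smul' c f := by
    funext x
    simp [← Finset.smul_sum, smul_comm c]

theorem walkAverage_apply (f : V → E) (x : V) :
    walkAverage G f x = (G.degree x : ℝ)⁻¹ • ∑ y ∈ G.neighborFinset x, f y := rfl

theorem walkAverage_pow_succ_apply (t : ℕ) (f : V → E) (x : V) :
    (walkAverage G ^ (t + 1)) f x =
      (G.degree x : ℝ)⁻¹ • ∑ y ∈ G.neighborFinset x, (walkAverage G ^ t) f y := by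
  rw [pow_succ', Module.End.mul_apply, walkAverage_apply]

theorem degree_smul_walkAverage (f : V → E) (x : V) :
    (G.degree x : ℝ) • walkAverage G f x = ∑ y ∈ G.neighborFinset x, f y := by
  rw [walkAverage_apply]
  by_cases hx : G.degree x = 0
  · have hempty : G.neighborFinset x = ∅ := by
      rwa [← Finset.card_eq_zero, G.card_neighborFinset_eq_degree]
    simp [hempty]
  · exact smul_inv_smul₀ (Nat.cast_ne_zero.mpr hx) _

theorem walkAverage_pow_comp_linearMap (L : E →ₗ[ℝ] F) (t : ℕ) (f : V → E) (x : V) :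
    (walkAverage G ^ t) (fun y => L (f y)) x = L ((walkAverage G ^ t) f x) := by
  induction t generalizing x with
  | zero => simp
  | succ t ih => simp only [walkAverage_pow_succ_apply, ih, map_smul, map_sum]

theorem walkAverage_pow_const (t : ℕ) (c : E) {x : V} (hx : 0 < G.degree x) :
    (walkAverage G ^ t) (fun _ => c) x = c := by
  induction t generalizing x with
  | zero => simp
  | succ t ih =>
    have hneighbor : ∀ y ∈ G.neighborFinset x, (walkAverage G ^ t) (fun _ => c) y = c :=
      fun y hy => ih ((G.degree_pos_iff_exists_adj y).mpr
        ⟨x, ((G.mem_neighborFinset x y).mp hy).symm⟩)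
    rw [walkAverage_pow_succ_apply, Finset.sum_congr rfl hneighbor, Finset.sum_const,
      G.card_neighborFinset_eq_degree, ← Nat.cast_smul_eq_nsmul ℝ,
      inv_smul_smul₀ (Nat.cast_ne_zero.mpr hx.ne')]

theorem walkAverage_pow_le_of_forall_walk {t : ℕ} {v : V} {w w' : V → ℝ}
    (hle : ∀ (y : V) (p : G.Walk v y), p.length = t → w y ≤ w' y) :
    (walkAverage G ^ t) w v ≤ (walkAverage G ^ t) w' v := by
  induction t generalizing v with
  | zero => simpa using hle v .nil rfl
  | succ t ih =>
    simp only [walkAverage_pow_succ_apply]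
    gcongr with y hy
    exact ih fun z p hp => hle z (.cons ((G.mem_neighborFinset v y).mp hy) p) (by simp [hp])

end WalkAverage

section Drift

variable {V : Type*} {G : SimpleGraph V} {x v y y₁ y₂ : V}

theorem exists_isPath_snd_eq_of_dist_le (hreach : G.Reachable x v) (hadj : G.Adj v y)
    (hdist : G.dist x y ≤ G.dist x v) :
    ∃ p : G.Walk v x, p.IsPath ∧ p.length ≤ G.dist x v + 1 ∧ p.snd = y := by
  classical
  obtain ⟨p, hp, hlen⟩ := (hreach.trans hadj.reachable).symm.exists_path_of_dist
  rw [SimpleGraph.dist_comm] at hlen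
  have hv : v ∉ p.support := by
    intro hv
    have hsplit : (p.takeUntil v hv).length + (p.dropUntil v hv).length = p.length := by
      rw [← SimpleGraph.Walk.length_append, p.take_spec hv]
    have htake : 1 ≤ (p.takeUntil v hv).length :=
      (SimpleGraph.dist_eq_one_iff_adj.mpr hadj.symm).symm.trans_le (SimpleGraph.dist_le _)
    have hdrop : G.dist x v ≤ (p.dropUntil v hv).length :=
      SimpleGraph.dist_comm.trans_le (SimpleGraph.dist_le _)
    omega
  exact ⟨.cons hadj p, hp.cons hv, by simpa [hlen] using hdist, by simp⟩

theorem eq_of_adj_of_dist_le_of_lt_egirth (hreach : G.Reachable x v)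
    (hgirth : ((2 * G.dist x v + 2 : ℕ) : ℕ∞) < G.egirth) (hadj₁ : G.Adj v y₁)
    (hadj₂ : G.Adj v y₂) (hdist₁ : G.dist x y₁ ≤ G.dist x v)
    (hdist₂ : G.dist x y₂ ≤ G.dist x v) : y₁ = y₂ := by
  by_contra hne
  obtain ⟨p, hp, hplen, hpsnd⟩ := exists_isPath_snd_eq_of_dist_le hreach hadj₁ hdist₁
  obtain ⟨q, hq, hqlen, hqsnd⟩ := exists_isPath_snd_eq_of_dist_le hreach hadj₂ hdist₂
  have hpq : p ≠ q := by
    rintro rfl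
    exact hne (hpsnd.symm.trans hqsnd)
  obtain ⟨w, -, -, c, hc, hclen⟩ := hp.exists_isCycle_length_le_add_of_ne hq hpq
  have hshort : (2 * G.dist x v + 2 : ℕ) < c.length := by
    exact_mod_cast hgirth.trans_le (SimpleGraph.egirth_le_length hc)
  omega

theorem dist_add_one_sub_le_dist_of_adj (hadj : G.Adj v y) :
    (G.dist x v : ℝ) + 1 - (if G.dist x y ≤ G.dist x v then 2 else 0) ≤ G.dist x y := by
  have hstep := hadj.diff_dist_adj (u := x)
  split_ifs with hle
  · have hge : G.dist x v ≤ G.dist x y + 1 := by omega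
    have : (G.dist x v : ℝ) ≤ G.dist x y + 1 := by exact_mod_cast hge
    linarith
  · have hgt : G.dist x v + 1 ≤ G.dist x y := by omega
    simpa using (by exact_mod_cast hgt : (G.dist x v : ℝ) + 1 ≤ G.dist x y)

theorem dist_add_drift_le_walkAverage_dist [G.LocallyFinite] (hreach : G.Reachable x v)
    (hgirth : ((2 * G.dist x v + 2 : ℕ) : ℕ∞) < G.egirth) :
    (G.dist x v : ℝ) + (G.degree v - 2) / G.degree v ≤
      walkAverage G (fun y => (G.dist x y : ℝ)) v := by
  rcases Nat.eq_zero_or_pos (G.degree v) with hdeg | hdeg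
  -- Here `x / 0 = 0` makes the drift `0`, whereas in the form `1 - 2 / deg v` it would be `1`.
  · have hxv : x = v := by
      by_contra hne
      obtain ⟨p⟩ := hreach.symm
      have hadj := p.adj_snd (SimpleGraph.Walk.not_nil_of_ne (Ne.symm hne))
      exact hdeg.not_gt ((G.degree_pos_iff_exists_adj v).mpr ⟨_, hadj⟩)
    simp [hxv, hdeg, walkAverage_apply]
  have hback : ((G.neighborFinset v).filter fun y => G.dist x y ≤ G.dist x v).card ≤ 1 := by
    refine Finset.card_le_one.mpr fun y₁ hy₁ y₂ hy₂ => ?_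
    rw [Finset.mem_filter, G.mem_neighborFinset] at hy₁ hy₂
    exact eq_of_adj_of_dist_le_of_lt_egirth hreach hgirth hy₁.1 hy₂.1 hy₁.2 hy₂.2
  have hdegR : (0 : ℝ) < G.degree v := Nat.cast_pos.mpr hdeg
  refine le_of_mul_le_mul_left ?_ hdegR
  calc (G.degree v : ℝ) * (G.dist x v + (G.degree v - 2) / G.degree v)
      = G.degree v * (G.dist x v + 1) - 1 * 2 := by field_simp; ring
    _ ≤ G.degree v * (G.dist x v + 1) -
          ((G.neighborFinset v).filter fun y => G.dist x y ≤ G.dist x v).card * 2 := by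
        gcongr
        exact_mod_cast hback
    _ = ∑ y ∈ G.neighborFinset v,
          ((G.dist x v : ℝ) + 1 - if G.dist x y ≤ G.dist x v then 2 else 0) := by
        simp [Finset.sum_sub_distrib, ← Finset.sum_filter, mul_add]
    _ ≤ ∑ y ∈ G.neighborFinset v, (G.dist x y : ℝ) :=
        Finset.sum_le_sum fun y hy =>
          dist_add_one_sub_le_dist_of_adj ((G.mem_neighborFinset v y).mp hy)
    _ = G.degree v * walkAverage G (fun y => (G.dist x y : ℝ)) v :=
        (degree_smul_walkAverage G _ v).symm

end Drift

section Stationary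

variable {V : Type*} [Fintype V] (G : SimpleGraph V) [DecidableRel G.Adj]
  {E : Type*} [AddCommGroup E] [Module ℝ E]

theorem sum_sum_neighborFinset_comm {A : Type*} [AddCommMonoid A] (F : V → V → A) :
    ∑ x, ∑ y ∈ G.neighborFinset x, F x y = ∑ x, ∑ y ∈ G.neighborFinset x, F y x :=
  Finset.sum_comm' fun x y => by simp [G.adj_comm]

theorem sum_degree_smul_walkAverage (w : V → E) :
    ∑ x, (G.degree x : ℝ) • walkAverage G w x = ∑ x, (G.degree x : ℝ) • w x := by
  simp only [degree_smul_walkAverage]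
  rw [sum_sum_neighborFinset_comm]
  simp [Nat.cast_smul_eq_nsmul]

theorem sum_degree_smul_walkAverage_pow (t : ℕ) (w : V → E) :
    ∑ x, (G.degree x : ℝ) • (walkAverage G ^ t) w x = ∑ x, (G.degree x : ℝ) • w x := by
  induction t with
  | zero => simp
  | succ t ih => rw [pow_succ', Module.End.mul_apply, sum_degree_smul_walkAverage, ih]

/-- For the stationary random walk `(Z_t)`, started from the distribution proportional to the
degree, this is the expectation of `F Z_0 Z_t` multiplied by the sum of the degrees. -/
noncomputable def endpointSum (t : ℕ) : (V → V → ℝ) →ₗ[ℝ] ℝ :=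
  ∑ x, (G.degree x : ℝ) • LinearMap.proj x ∘ₗ (walkAverage G ^ t) ∘ₗ LinearMap.proj x

theorem endpointSum_apply (t : ℕ) (F : V → V → ℝ) :
    endpointSum G t F = ∑ x, (G.degree x : ℝ) * (walkAverage G ^ t) (F x) x := by
  simp [endpointSum]

theorem endpointSum_succ (t : ℕ) (F : V → V → ℝ) :
    endpointSum G (t + 1) F = endpointSum G t fun x => walkAverage G (F x) := by
  simp only [endpointSum_apply, pow_succ, Module.End.mul_apply]

theorem endpointSum_one (F : V → V → ℝ) :
    endpointSum G 1 F = ∑ x, ∑ y ∈ G.neighborFinset x, F x y := by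
  simp only [endpointSum_apply, pow_one, ← smul_eq_mul, degree_smul_walkAverage]

theorem endpointSum_fst (t : ℕ) (w : V → ℝ) :
    endpointSum G t (fun x _ => w x) = ∑ x, (G.degree x : ℝ) * w x := by
  rw [endpointSum_apply]
  refine Finset.sum_congr rfl fun x _ => ?_
  rcases Nat.eq_zero_or_pos (G.degree x) with hx | hx
  · simp [hx]
  · rw [walkAverage_pow_const G t (w x) hx]

theorem endpointSum_snd (t : ℕ) (w : V → ℝ) :
    endpointSum G t (fun _ y => w y) = ∑ x, (G.degree x : ℝ) * w x :=
  (endpointSum_apply G t _).trans (sum_degree_smul_walkAverage_pow G t w)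

theorem endpointSum_le_of_forall_walk {t : ℕ} {F F' : V → V → ℝ}
    (hle : ∀ (x y : V) (p : G.Walk x y), p.length = t → F x y ≤ F' x y) :
    endpointSum G t F ≤ endpointSum G t F' := by
  simp only [endpointSum_apply]
  gcongr with x
  exact walkAverage_pow_le_of_forall_walk G (hle x)

theorem sq_endpointSum_le (t : ℕ) (F : V → V → ℝ) :
    endpointSum G t F ^ 2 ≤
      (∑ x, (G.degree x : ℝ)) * endpointSum G t fun x y => F x y ^ 2 := by
  have hquad (m : ℝ) : 0 ≤ (∑ x, (G.degree x : ℝ)) * (m * m) + (-2 * endpointSum G t F) * m +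
      endpointSum G t fun x y => F x y ^ 2 := by
    calc 0 = endpointSum G t 0 := (map_zero _).symm
      _ ≤ endpointSum G t (fun x y => (F x y - m) ^ 2) :=
          endpointSum_le_of_forall_walk G fun x y _ _ => sq_nonneg _
      _ = endpointSum G t
            ((fun _ _ => m * m) + (-2 * m) • F + fun x y => F x y ^ 2) := by
          congr 1
          funext x y
          simp only [Pi.add_apply, Pi.smul_apply, smul_eq_mul]
          ring
      _ = _ := by
          rw [map_add, map_add, map_smul, endpointSum_fst G t fun _ => m * m,
            ← Finset.sum_mul, smul_eq_mul]
          ring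
  have hdiscrim := discrim_le_zero hquad
  rw [discrim] at hdiscrim
  linarith

theorem mul_sum_degree_sub_two_le_endpointSum_dist {t : ℕ}
    (hgirth : ((2 * t : ℕ) : ℕ∞) < G.egirth) :
    t * ∑ x, ((G.degree x : ℝ) - 2) ≤ endpointSum G t fun x y => (G.dist x y : ℝ) := by
  have hdrift : ∑ x, ((G.degree x : ℝ) - 2) ≤
      ∑ x, (G.degree x : ℝ) * ((G.degree x - 2) / G.degree x) := by
    gcongr with x
    rcases eq_or_ne (G.degree x : ℝ) 0 with hx | hx
    · norm_num [hx]
    · rw [mul_div_cancel₀ _ hx]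
  induction t with
  | zero => simp [endpointSum_apply]
  | succ t ih =>
    calc ((t + 1 : ℕ) : ℝ) * ∑ x, ((G.degree x : ℝ) - 2)
        = t * ∑ x, ((G.degree x : ℝ) - 2) + ∑ x, ((G.degree x : ℝ) - 2) := by push_cast; ring
      _ ≤ endpointSum G t (fun x y => (G.dist x y : ℝ)) +
            endpointSum G t fun _ y => (G.degree y - 2) / G.degree y := by
          rw [endpointSum_snd]
          exact add_le_add (ih (lt_of_le_of_lt (by gcongr; omega) hgirth)) hdrift
      _ = endpointSum G t fun x y => (G.dist x y : ℝ) + (G.degree y - 2) / G.degree y :=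
          (map_add _ _ _).symm
      _ ≤ endpointSum G t fun x => walkAverage G fun y => (G.dist x y : ℝ) := by
          refine endpointSum_le_of_forall_walk G fun x y p hp => ?_
          have hdist : G.dist x y ≤ t := hp ▸ SimpleGraph.dist_le p
          exact dist_add_drift_le_walkAverage_dist p.reachable
            (lt_of_le_of_lt (by gcongr; omega) hgirth)
      _ = endpointSum G (t + 1) fun x y => (G.dist x y : ℝ) := (endpointSum_succ G t _).symm

end Stationary

section MarkovType

variable {V : Type*} [Fintype V] (G : SimpleGraph V) [DecidableRel G.Adj]
  {H : Type*} [NormedAddCommGroup H] [InnerProductSpace ℝ H]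

/-- The inner product of `H`-valued functions on the vertices, weighted by the degree; it is the
one for which the random walk is reversible. -/
noncomputable def degreeInner : LinearMap.BilinForm ℝ (V → H) :=
  ∑ x, (G.degree x : ℝ) • (innerₗ H).compl₁₂ (LinearMap.proj x) (LinearMap.proj x)

theorem degreeInner_apply (f h : V → H) :
    degreeInner G f h = ∑ x, (G.degree x : ℝ) * inner ℝ (f x) (h x) := by
  simp [degreeInner]

theorem isSymm_degreeInner : (degreeInner G : LinearMap.BilinForm ℝ (V → H)).IsSymm where
  eq f h := by simp only [degreeInner_apply, real_inner_comm]

theorem degreeInner_walkAverage (f h : V → H) :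
    degreeInner G f (walkAverage G h) =
      ∑ x, ∑ y ∈ G.neighborFinset x, inner ℝ (f x) (h y) := by
  simp only [degreeInner_apply, ← inner_smul_right, degree_smul_walkAverage, inner_sum]

theorem isSelfAdjoint_walkAverage :
    (degreeInner G : LinearMap.BilinForm ℝ (V → H)).IsSelfAdjoint (walkAverage G) := by
  intro f h
  rw [← (isSymm_degreeInner G).eq, degreeInner_walkAverage,
    degreeInner_walkAverage, sum_sum_neighborFinset_comm]
  simp only [real_inner_comm]

theorem abs_degreeInner_walkAverage_le (f : V → H) :
    |degreeInner G f (walkAverage G f)| ≤ degreeInner G f f := by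
  have hpair (x y : V) : |inner ℝ (f x) (f y)| ≤ ‖f x‖ ^ 2 / 2 + ‖f y‖ ^ 2 / 2 := by
    have := abs_real_inner_le_norm (f x) (f y)
    linarith [two_mul_le_add_sq ‖f x‖ ‖f y‖]
  calc |degreeInner G f (walkAverage G f)|
      ≤ ∑ x, ∑ y ∈ G.neighborFinset x, |inner ℝ (f x) (f y)| := by
        rw [degreeInner_walkAverage]
        exact (Finset.abs_sum_le_sum_abs _ _).trans
          (Finset.sum_le_sum fun x _ => Finset.abs_sum_le_sum_abs _ _)
    _ ≤ ∑ x, ∑ y ∈ G.neighborFinset x, (‖f x‖ ^ 2 / 2 + ‖f y‖ ^ 2 / 2) := by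
        gcongr with x _ y _
        exact hpair x y
    _ = ∑ x, ∑ y ∈ G.neighborFinset x, ‖f x‖ ^ 2 := by
        simp only [Finset.sum_add_distrib]
        rw [sum_sum_neighborFinset_comm G fun _ y => ‖f y‖ ^ 2 / 2]
        simp only [← Finset.sum_add_distrib, add_halves]
    _ = degreeInner G f f := by simp [degreeInner_apply]

theorem endpointSum_inner (t : ℕ) (f h : V → H) :
    endpointSum G t (fun x y => inner ℝ (f x) (h y)) =
      degreeInner G f ((walkAverage G ^ t) h) := by
  rw [endpointSum_apply, degreeInner_apply]
  refine Finset.sum_congr rfl fun x _ => ?_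
  exact congrArg _ (walkAverage_pow_comp_linearMap G (innerₗ H (f x)) t h x)

theorem endpointSum_norm_sub_sq (t : ℕ) (f : V → H) :
    endpointSum G t (fun x y => ‖f x - f y‖ ^ 2) =
      2 * degreeInner G f (f - (walkAverage G ^ t) f) := by
  have hexpand : (fun x y => ‖f x - f y‖ ^ 2) =
      (fun x _ => ‖f x‖ ^ 2) + (fun _ y => ‖f y‖ ^ 2) -
        (2 : ℝ) • fun x y => (inner ℝ (f x) (f y) : ℝ) := by
    funext x y
    simp only [norm_sub_sq_real, Pi.sub_apply, Pi.add_apply, Pi.smul_apply, smul_eq_mul]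
    ring
  have hself : degreeInner G f f = ∑ x, (G.degree x : ℝ) * ‖f x‖ ^ 2 := by
    simp [degreeInner_apply]
  rw [hexpand, map_sub, map_add, map_smul, endpointSum_fst, endpointSum_snd, endpointSum_inner,
    map_sub, hself, smul_eq_mul]
  ring

theorem endpointSum_norm_sub_sq_le_mul (t : ℕ) (f : V → H) :
    endpointSum G t (fun x y => ‖f x - f y‖ ^ 2) ≤
      t * endpointSum G 1 fun x y => ‖f x - f y‖ ^ 2 := by
  have hmarkov : degreeInner G f (f - (walkAverage G ^ t) f) ≤
      t * degreeInner G f (f - walkAverage G f) :=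
    bilin_sub_pow_le_mul (B := degreeInner G) (T := walkAverage G) (isSelfAdjoint_walkAverage G)
      (isSymm_degreeInner G) (abs_degreeInner_walkAverage_le G) t f
  rw [endpointSum_norm_sub_sq, endpointSum_norm_sub_sq, pow_one]
  linarith

theorem endpointSum_norm_sub_sq_le_of_adj {f : V → H} {L : ℝ}
    (hf : ∀ x y, G.Adj x y → ‖f x - f y‖ ≤ L) (t : ℕ) :
    endpointSum G t (fun x y => ‖f x - f y‖ ^ 2) ≤ t * ((∑ x, (G.degree x : ℝ)) * L ^ 2) := by
  refine (endpointSum_norm_sub_sq_le_mul G t f).trans ?_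
  gcongr
  calc endpointSum G 1 (fun x y => ‖f x - f y‖ ^ 2)
      ≤ ∑ x, ∑ y ∈ G.neighborFinset x, L ^ 2 := by
        rw [endpointSum_one]
        gcongr with x _ y hy
        exact hf x y ((G.mem_neighborFinset x y).mp hy)
    _ = (∑ x, (G.degree x : ℝ)) * L ^ 2 := by simp [Finset.sum_mul]

end MarkovType

section Distortion

variable {V : Type*} [Fintype V] (G : SimpleGraph V) [DecidableRel G.Adj]
  {H : Type*} [NormedAddCommGroup H]

theorem sq_mul_endpointSum_dist_sq_le {f : V → H} {lam : ℝ} (hlam : 0 ≤ lam) {t : ℕ}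
    (hf : ∀ x y, G.Reachable x y → G.dist x y ≤ t → lam * G.dist x y ≤ ‖f x - f y‖) :
    lam ^ 2 * endpointSum G t (fun x y => (G.dist x y : ℝ) ^ 2) ≤
      endpointSum G t fun x y => ‖f x - f y‖ ^ 2 := by
  rw [← smul_eq_mul, ← map_smul]
  refine endpointSum_le_of_forall_walk G fun x y p hp => ?_
  have hlower := hf x y p.reachable (hp ▸ SimpleGraph.dist_le p)
  simpa only [Pi.smul_apply, smul_eq_mul, mul_pow] using pow_le_pow_left₀ (by positivity) hlower 2

variable [InnerProductSpace ℝ H]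

theorem mul_sq_sum_degree_sub_two_le {f : V → H} {lam L : ℝ} (hlam : 0 ≤ lam) {t : ℕ}
    (ht : 0 < t) (hgirth : ((2 * t : ℕ) : ℕ∞) < G.egirth)
    (hnonneg : 0 ≤ ∑ x, ((G.degree x : ℝ) - 2))
    (hlower : ∀ x y, G.Reachable x y → G.dist x y ≤ t → lam * G.dist x y ≤ ‖f x - f y‖)
    (hupper : ∀ x y, G.Adj x y → ‖f x - f y‖ ≤ L) :
    t * (lam * ∑ x, ((G.degree x : ℝ) - 2)) ^ 2 ≤ (L * ∑ x, (G.degree x : ℝ)) ^ 2 := by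
  have htR : (0 : ℝ) < t := Nat.cast_pos.mpr ht
  refine le_of_mul_le_mul_left ?_ htR
  calc t * (t * (lam * ∑ x, ((G.degree x : ℝ) - 2)) ^ 2)
      = lam ^ 2 * (t * ∑ x, ((G.degree x : ℝ) - 2)) ^ 2 := by ring
    _ ≤ lam ^ 2 * (endpointSum G t fun x y => (G.dist x y : ℝ)) ^ 2 := by
        gcongr
        exact mul_sum_degree_sub_two_le_endpointSum_dist G hgirth
    _ ≤ lam ^ 2 * ((∑ x, (G.degree x : ℝ)) * endpointSum G t fun x y => (G.dist x y : ℝ) ^ 2) := by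
        gcongr
        exact sq_endpointSum_le G t _
    _ = (∑ x, (G.degree x : ℝ)) *
          (lam ^ 2 * endpointSum G t fun x y => (G.dist x y : ℝ) ^ 2) := by ring
    _ ≤ (∑ x, (G.degree x : ℝ)) * (t * ((∑ x, (G.degree x : ℝ)) * L ^ 2)) := by
        refine mul_le_mul_of_nonneg_left ?_ (by positivity)
        exact (sq_mul_endpointSum_dist_sq_le G hlam hlower).trans
          (endpointSum_norm_sub_sq_le_of_adj G hupper t)
    _ = t * (L * ∑ x, (G.degree x : ℝ)) ^ 2 := by ring

theorem mul_sq_one_sub_two_div_averageDegree_le {k : ℝ}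
    (hk : k = 2 * (G.edgeFinset.card : ℝ) / (Fintype.card V : ℝ)) (hk_two : 2 < k) {f : V → H}
    {lam D : ℝ} (hlam : 0 < lam) {t : ℕ} (ht : 0 < t) (hgirth : ((2 * t : ℕ) : ℕ∞) < G.egirth)
    (hlower : ∀ x y, G.Reachable x y → G.dist x y ≤ t → lam * G.dist x y ≤ ‖f x - f y‖)
    (hupper : ∀ x y, G.Adj x y → ‖f x - f y‖ ≤ D * lam) :
    t * (1 - 2 / k) ^ 2 ≤ D ^ 2 := by
  have hk_pos : 0 < k := by linarith
  have hcard : (0 : ℝ) < Fintype.card V := by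
    refine (Nat.cast_nonneg _).lt_of_ne fun hzero => hk_pos.ne' ?_
    rw [hk, ← hzero, div_zero]
  have hvol : ∑ x, (G.degree x : ℝ) = k * Fintype.card V := by
    rw [hk, div_mul_cancel₀ _ hcard.ne']
    exact_mod_cast G.sum_degrees_eq_twice_card_edges
  have hexcess : ∑ x, ((G.degree x : ℝ) - 2) = (1 - 2 / k) * (k * Fintype.card V) := by
    rw [Finset.sum_sub_distrib, hvol, Finset.sum_const, Finset.card_univ, nsmul_eq_mul]
    field_simp
  have hdrift : 0 ≤ 1 - 2 / k := sub_nonneg.mpr ((div_le_one hk_pos).mpr hk_two.le)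
  have hmain := mul_sq_sum_degree_sub_two_le G hlam.le ht hgirth
    (by rw [hexcess]; positivity) hlower hupper
  rw [hexcess, hvol] at hmain
  refine le_of_mul_le_mul_right ?_ (by positivity : 0 < (lam * (k * Fintype.card V)) ^ 2)
  linarith

theorem girth_average_degree_euclidean_distortion_general {k : ℝ}
    (hk : k = 2 * (G.edgeFinset.card : ℝ) / (Fintype.card V : ℝ)) (hk_two : 2 < k) {f : V → H}
    {lam D : ℝ} (hlam : 0 < lam) (hD : 0 ≤ D)
    (hlower : ∀ x y, G.Reachable x y → 2 * G.dist x y < G.girth →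
      lam * G.dist x y ≤ ‖f x - f y‖)
    (hupper : ∀ x y, G.Adj x y → ‖f x - f y‖ ≤ D * lam) :
    1 / 2 * (1 - 2 / k) * Real.sqrt G.girth ≤ D := by
  by_cases hacyclic : G.IsAcyclic
  · simpa [SimpleGraph.girth_eq_zero.mpr hacyclic] using hD
  have hthree := SimpleGraph.three_le_girth hacyclic
  obtain ⟨t, ht, htwo, hfour⟩ : ∃ t : ℕ, 0 < t ∧ 2 * t < G.girth ∧ G.girth ≤ 4 * t :=
    ⟨(G.girth - 1) / 2, by omega, by omega, by omega⟩
  have hegirth : ((2 * t : ℕ) : ℕ∞) < G.egirth :=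
    (Nat.cast_lt.mpr htwo).trans_le G.egirth.natCast_toNat_le_self
  have hbound : t * (1 - 2 / k) ^ 2 ≤ D ^ 2 :=
    mul_sq_one_sub_two_div_averageDegree_le G hk hk_two hlam ht hegirth
      (fun x y hxy hdist => hlower x y hxy (by omega)) hupper
  refine (abs_le_of_sq_le_sq' ?_ hD).2
  calc (1 / 2 * (1 - 2 / k) * Real.sqrt G.girth) ^ 2
      = 1 / 4 * G.girth * (1 - 2 / k) ^ 2 := by
        rw [mul_pow, Real.sq_sqrt (Nat.cast_nonneg _)]; ring
    _ ≤ 1 / 4 * (4 * t) * (1 - 2 / k) ^ 2 := by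
        gcongr
        exact_mod_cast hfour
    _ ≤ D ^ 2 := by linarith

end Distortion

/-- **Markov-type lower bound for graphs with large girth (Linial–Magen–Naor /
Bartal–Linial–Mendel–Naor).** There is a universal constant `c > 0` such that if `G` is a
finite connected simple graph with girth `g` and average degree `k = 2|E|/|V| > 2`, then any
embedding of `(V, d_G)` into a Hilbert space with scaling `λ > 0` and distortion bound `D > 0`
satisfies `D ≥ c (1 - 2/k) √g`. -/
theorem girth_average_degree_euclidean_distortion :
    ∃ c : ℝ, 0 < c ∧
      ∀ (V : Type u) [Fintype V] [DecidableEq V] (G : SimpleGraph V) [DecidableRel G.Adj],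
        G.Connected → ∀ g : ℕ, G.girth = (g : ℕ∞) →
        ∀ k : ℝ, k = 2 * (G.edgeFinset.card : ℝ) / (Fintype.card V : ℝ) → 2 < k →
        ∀ (H : Type v) [NormedAddCommGroup H] [InnerProductSpace ℝ H],
          ∀ (f : V → H) (lam D : ℝ), 0 < lam → 0 < D →
            (∀ x y : V, lam * (G.dist x y : ℝ) ≤ ‖f x - f y‖ ∧
              ‖f x - f y‖ ≤ D * (lam * (G.dist x y : ℝ))) →
            c * (1 - 2 / k) * Real.sqrt (g : ℝ) ≤ D := by
  refine ⟨1 / 2, by norm_num, ?_⟩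
  intro V _ _ G _ _ g hg k hk hk_two H _ _ f lam D hlam hD hf
  obtain rfl : G.girth = g := by exact_mod_cast hg
  refine girth_average_degree_euclidean_distortion_general G hk hk_two hlam hD.le
    (fun x y _ _ => (hf x y).1) fun x y hxy => ?_
  simpa [SimpleGraph.dist_eq_one_iff_adj.mpr hxy] using (hf x y).2
end

section
/- Let G = (V,E) be a finite connected k-regular simple graph with n vertices and girth g, with shortest path metric d_G. For a subset S ⊆ V and m ∈ ℕ, let E_{G^{(m)}}(S) denote the number of unordered pairs {u,v} ⊆ S with d_G(u,v) = m. Then for every even integer m with 0 < m < g/2 and every nonempty S ⊆ V, 2 E_{G^{(m)}}(S)/|S| ≥ (|S|/n) · k(k−1)^{m−1} − (k−1)^{m/2−1} k(m+1). In particular, if |S|/n ≥ (2m+2)/(k−1)^{m/2}, then 2 E_{G^{(m)}}(S)/|S| ≥ k(k−1)^{m−1} |S| / (2n). -/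
universe u

/-!
Let `A` be the adjacency matrix, `q = k - 1`, and `D r` the 0-1 matrix of the pairs at distance `r`.
As long as `2 * r` is less than the girth, geodesics of length `r` are unique, so `D` satisfies
`A * D (r + 1) = D (r + 2) + q • D r` for `r ≥ 1`. This is the recurrence of the Dickson polynomials
`T r` and `E r` of the first and second kind with parameter `q`, and it gives
`D (r + 2) = E (r + 2)(A) - E r (A)`.

The doubling formula `T (2 * n) = T n ^ 2 - 2 * q ^ n` together with
`E (n + 2) = T (n + 2) + q * E n` exhibits `E (2 * h + 2) - E (2 * h) + c`, for a constant
`c ≤ q ^ h * k * (2 * h + 3)`, as a sum of squares. Hence `D (2 * h + 2) + c • 1` is positive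
semidefinite. The all-ones vector is an eigenvector with eigenvalue `k * q ^ (2 * h + 1) + c`, so
evaluating the quadratic form at the indicator of `S` minus its mean bounds the number of pairs in
`S` at distance `2 * h + 2` from below.
-/

open SimpleGraph Polynomial Matrix

section LocalStructure

variable {V : Type*} {G : SimpleGraph V} {u v w w₁ w₂ : V} {r : ℕ}

lemma egirth_le_length_add_length {p q : G.Walk u v} (hp : p.IsPath) (hq : q.IsPath)
    (hne : p ≠ q) : G.egirth ≤ p.length + q.length := by
  obtain ⟨_, -, -, c, hc, hle⟩ := hp.exists_isCycle_length_le_add_of_ne hq hne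
  exact (egirth_le_length hc).trans (mod_cast hle)

lemma exists_isPath_cons_length_eq_edist (huw : G.Adj u w) (hwv : G.Reachable w v)
    (hle : G.edist w v ≤ G.edist u v) :
    ∃ p : G.Walk w v, (p.cons huw).IsPath ∧ p.length = G.edist w v := by
  classical
  obtain ⟨p, hp, hlen⟩ := hwv.exists_path_of_dist
  have hlen' : (p.length : ℕ∞) = G.edist w v := by rw [hlen, hwv.coe_dist_eq_edist]
  refine ⟨p, hp.cons fun hu ↦ ?_, hlen'⟩
  have hshort : G.edist u v < p.length := (edist_le (p.dropUntil u hu)).trans_lt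
    (mod_cast Walk.length_dropUntil_lt_length hu huw.ne)
  exact absurd hle (hlen' ▸ hshort).not_ge

lemma egirth_le_of_adj_of_adj_of_ne (h₁ : G.Adj u w₁) (h₂ : G.Adj u w₂) (hne : w₁ ≠ w₂)
    (hle₁ : G.edist w₁ v ≤ G.edist u v) (hle₂ : G.edist w₂ v ≤ G.edist u v) :
    G.egirth ≤ G.edist w₁ v + G.edist w₂ v + 2 := by
  by_cases hr₁ : G.Reachable w₁ v
  swap
  · simp [edist_eq_top_of_not_reachable hr₁]
  have hr₂ : G.Reachable w₂ v := h₂.symm.reachable.trans (h₁.reachable.trans hr₁)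
  obtain ⟨p, hp, hplen⟩ := exists_isPath_cons_length_eq_edist h₁ hr₁ hle₁
  obtain ⟨q, hq, hqlen⟩ := exists_isPath_cons_length_eq_edist h₂ hr₂ hle₂
  have hpq : p.cons h₁ ≠ q.cons h₂ := fun h ↦ hne (by simpa using congrArg Walk.snd h)
  calc G.egirth ≤ (p.cons h₁).length + (q.cons h₂).length := egirth_le_length_add_length hp hq hpq
    _ = G.edist w₁ v + G.edist w₂ v + 2 := by
      rw [← hplen, ← hqlen]
      norm_cast
      simp only [Walk.length_cons]
      ring

lemma edist_le_edist_add_one_of_adj (huw : G.Adj u w) (v : V) :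
    G.edist u v ≤ G.edist w v + 1 := by
  rw [add_comm, ← edist_eq_one_iff_adj.2 huw]
  exact G.edist_triangle

lemma exists_adj_edist_eq (h : G.edist u v = (r + 1 : ℕ)) :
    ∃ w, G.Adj u w ∧ G.edist w v = r := by
  obtain ⟨p, hp⟩ := exists_walk_of_edist_eq_coe h
  cases p with
  | nil => simp at hp
  | @cons _ w _ huw p =>
    refine ⟨w, huw, le_antisymm ?_ ?_⟩
    · exact (edist_le p).trans (mod_cast (Nat.succ_injective hp).le)
    · have hle := edist_le_edist_add_one_of_adj huw v
      rw [h, Nat.cast_add_one] at hle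
      exact (ENat.add_le_add_iff_right ENat.one_ne_top).1 hle

lemma existsUnique_adj_edist_eq (h : G.edist u v = (r + 1 : ℕ))
    (hg : (2 * (r + 1) : ℕ) < G.egirth) : ∃! w, G.Adj u w ∧ G.edist w v = r := by
  obtain ⟨w, huw, hw⟩ := exists_adj_edist_eq h
  refine ⟨w, ⟨huw, hw⟩, fun x ⟨hux, hx⟩ ↦ ?_⟩
  by_contra hne
  have hle : (r : ℕ∞) ≤ G.edist u v := by rw [h]; exact_mod_cast r.le_succ
  have hcycle := egirth_le_of_adj_of_adj_of_ne hux huw hne (hx.trans_le hle) (hw.trans_le hle)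
  rw [hx, hw] at hcycle
  have := hg.trans_le hcycle
  norm_cast at this
  lia

-- Otherwise the neighbour of `u` closest to `v` and `w` would close an odd cycle of length
-- at most `2 * r + 1`.
lemma edist_ne_of_adj (huw : G.Adj u w) (h : G.edist u v = r)
    (hg : (2 * r + 1 : ℕ) < G.egirth) : G.edist w v ≠ r := by
  intro hw
  cases r with
  | zero => exact huw.ne ((edist_eq_zero_iff.1 h).trans (edist_eq_zero_iff.1 hw).symm)
  | succ d =>
    obtain ⟨x, hux, hx⟩ := exists_adj_edist_eq h
    have hxw : G.edist x v < G.edist w v := by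
      rw [hx, hw]
      exact_mod_cast d.lt_succ_self
    have hwx : w ≠ x := fun h ↦ hxw.ne' (h ▸ rfl)
    have hcycle := egirth_le_of_adj_of_adj_of_ne huw hux hwx (hw.trans h.symm).le
      (hxw.le.trans (hw.trans h.symm).le)
    rw [hw, hx] at hcycle
    have := hg.trans_le hcycle
    norm_cast at this
    lia

lemma edist_eq_succ_or_edist_add_one_eq_of_adj (huw : G.Adj u w) (h : G.edist u v = r)
    (hg : (2 * r + 1 : ℕ) < G.egirth) :
    G.edist w v = (r + 1 : ℕ) ∨ G.edist w v + 1 = r := by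
  have hne := edist_ne_of_adj huw h hg
  have hup := edist_le_edist_add_one_of_adj huw v
  have hdown := edist_le_edist_add_one_of_adj huw.symm v
  have hfinite : G.edist w v ≠ ⊤ := fun htop ↦ by simp [h, htop] at hdown
  lift G.edist w v to ℕ using hfinite with d
  rw [h] at hup hdown
  norm_cast at hne hup hdown ⊢
  lia

lemma two_le_of_isRegularOfDegree_of_not_isAcyclic [G.LocallyFinite] {k : ℕ}
    (hreg : G.IsRegularOfDegree k) (hcyc : ¬ G.IsAcyclic) : 2 ≤ k := by
  classical
  simp only [IsAcyclic, not_forall, not_not] at hcyc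
  obtain ⟨v, c, hc⟩ := hcyc
  have hsub : {c.snd, c.penultimate} ⊆ G.neighborFinset v := by
    simpa [Finset.insert_subset_iff] using
      ⟨c.adj_snd hc.not_nil, (c.adj_penultimate hc.not_nil).symm⟩
  calc 2 = ({c.snd, c.penultimate} : Finset V).card := by
        rw [Finset.card_pair hc.snd_ne_penultimate]
    _ ≤ (G.neighborFinset v).card := Finset.card_le_card hsub
    _ = k := hreg v

variable [Fintype (G.neighborSet u)]

lemma card_neighborFinset_filter_edist_eq_one (h : G.edist u v = (r + 1 : ℕ))
    (hg : (2 * (r + 1) : ℕ) < G.egirth) :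
    ((G.neighborFinset u).filter fun w ↦ G.edist w v = r).card = 1 := by
  rw [Finset.card_eq_one_iff_existsUnique]
  simpa using existsUnique_adj_edist_eq h hg

lemma card_neighborFinset_filter_edist_add_one (h : G.edist u v = (r + 1 : ℕ))
    (hg : (2 * (r + 1) + 1 : ℕ) < G.egirth) :
    ((G.neighborFinset u).filter fun w ↦ G.edist w v = (r + 2 : ℕ)).card + 1 = G.degree u := by
  classical
  have hg' : (2 * (r + 1) : ℕ) < G.egirth := lt_of_le_of_lt (mod_cast Nat.le_succ _) hg
  obtain ⟨w, ⟨huw, hw⟩, huniq⟩ := existsUnique_adj_edist_eq h hg'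
  have herase : ((G.neighborFinset u).filter fun x ↦ G.edist x v = (r + 2 : ℕ)) =
      (G.neighborFinset u).erase w := by
    ext x
    rw [Finset.mem_filter, Finset.mem_erase, mem_neighborFinset, and_comm]
    refine and_congr_left fun hux ↦ ⟨?_, fun hxw ↦ ?_⟩
    · rintro hx rfl
      rw [hw] at hx
      norm_cast at hx
      lia
    · refine (edist_eq_succ_or_edist_add_one_eq_of_adj hux h hg).resolve_right fun hx ↦ ?_
      exact hxw (huniq x ⟨hux, by simpa using hx⟩)
  rw [herase, Finset.card_erase_add_one ((G.mem_neighborFinset u w).2 huw),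
    card_neighborFinset_eq_degree]

lemma neighborFinset_filter_edist_eq_empty (hne : G.edist u v ≠ r)
    (hne' : G.edist u v ≠ (r + 2 : ℕ)) (hg : (2 * (r + 1) + 1 : ℕ) < G.egirth) :
    (G.neighborFinset u).filter (fun w ↦ G.edist w v = (r + 1 : ℕ)) = ∅ := by
  refine Finset.filter_false_of_mem fun w huw hw ↦ ?_
  rw [mem_neighborFinset] at huw
  rcases edist_eq_succ_or_edist_add_one_eq_of_adj huw.symm hw hg with h | h
  · exact hne' h
  · exact hne (by simpa using h)

end LocalStructure

section DistanceMatrix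

variable {V : Type*} (R : Type*) (G : SimpleGraph V)

/-- The distance-`r` matrix of `G`, the adjacency matrix of the graph `G^{(r)}` when `r ≠ 0`.
The extended distance makes it the identity for `r = 0` even if `G` is disconnected. -/
noncomputable def distanceMatrix [Zero R] [One R] (r : ℕ) : Matrix V V R :=
  Matrix.of fun u v ↦ if G.edist u v = r then 1 else 0

lemma distanceMatrix_zero [DecidableEq V] [Zero R] [One R] : distanceMatrix R G 0 = 1 := by
  ext u v
  simp [distanceMatrix, Matrix.one_apply]

lemma distanceMatrix_one [DecidableRel G.Adj] [Zero R] [One R] :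
    distanceMatrix R G 1 = G.adjMatrix R := by
  ext u v
  simp [distanceMatrix, edist_eq_one_iff_adj, adjMatrix_apply]

variable [Fintype V] [DecidableRel G.Adj]

lemma adjMatrix_mul_distanceMatrix_apply [NonAssocSemiring R] (r : ℕ) (u v : V) :
    (G.adjMatrix R * distanceMatrix R G r) u v =
      ((G.neighborFinset u).filter fun w ↦ G.edist w v = r).card := by
  simp [adjMatrix_mul_apply, distanceMatrix]

variable {R G} {k r : ℕ}

-- Since geodesics of length `r + 2` are unique, only the number `c` of neighbours leading away
-- from a vertex at distance `r` enters.
lemma adjMatrix_mul_distanceMatrix_succ [NonAssocSemiring R] {c : R}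
    (hc : ∀ u v, G.edist u v = r →
      (((G.neighborFinset u).filter fun w ↦ G.edist w v = (r + 1 : ℕ)).card : R) = c)
    (hg : (2 * (r + 2) : ℕ) < G.egirth) :
    G.adjMatrix R * distanceMatrix R G (r + 1) =
      distanceMatrix R G (r + 2) + c • distanceMatrix R G r := by
  ext u v
  rw [adjMatrix_mul_distanceMatrix_apply, Matrix.add_apply, Matrix.smul_apply]
  simp only [distanceMatrix, Matrix.of_apply, smul_eq_mul, mul_ite, mul_one, mul_zero]
  by_cases hfar : G.edist u v = (r + 2 : ℕ)
  · have hne : G.edist u v ≠ r := by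
      rw [hfar]
      norm_cast
      lia
    rw [if_pos hfar, if_neg hne, card_neighborFinset_filter_edist_eq_one hfar hg, Nat.cast_one,
      add_zero]
  rw [if_neg hfar, zero_add]
  split_ifs with hnear
  · exact hc u v hnear
  · have hg' : (2 * (r + 1) + 1 : ℕ) < G.egirth := lt_of_le_of_lt (by norm_cast; lia) hg
    rw [neighborFinset_filter_edist_eq_empty hnear hfar hg', Finset.card_empty, Nat.cast_zero]

variable [CommRing R]

lemma distanceMatrix_two [DecidableEq V] (hreg : G.IsRegularOfDegree k) (hg : 4 < G.egirth) :
    distanceMatrix R G 2 = G.adjMatrix R * G.adjMatrix R - (k : R) • 1 := by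
  have hcount (u v : V) (huv : G.edist u v = (0 : ℕ)) :
      (((G.neighborFinset u).filter fun w ↦ G.edist w v = (0 + 1 : ℕ)).card : R) = k := by
    obtain rfl : u = v := edist_eq_zero_iff.1 huv
    rw [Finset.filter_true_of_mem, card_neighborFinset_eq_degree, hreg u]
    exact fun w hw ↦ by simpa [edist_eq_one_iff_adj, adj_comm] using hw
  rw [eq_sub_iff_add_eq, ← distanceMatrix_zero R G]
  simpa only [zero_add, distanceMatrix_one] using
    (adjMatrix_mul_distanceMatrix_succ hcount hg).symm

lemma distanceMatrix_add_three (hreg : G.IsRegularOfDegree k)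
    (hg : (2 * (r + 3) : ℕ) < G.egirth) :
    distanceMatrix R G (r + 3) =
      G.adjMatrix R * distanceMatrix R G (r + 2) - ((k : R) - 1) • distanceMatrix R G (r + 1) := by
  rw [eq_sub_iff_add_eq]
  refine (adjMatrix_mul_distanceMatrix_succ (fun u v huv ↦ ?_) hg).symm
  have hg' : (2 * (r + 1) + 1 : ℕ) < G.egirth := lt_of_le_of_lt (by norm_cast; lia) hg
  rw [eq_sub_iff_add_eq, ← hreg u, ← card_neighborFinset_filter_edist_add_one huv hg']
  push_cast
  rfl

lemma distanceMatrix_succ_mulVec_one (hreg : G.IsRegularOfDegree k)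
    (hg : (2 * (r + 1) : ℕ) < G.egirth) :
    distanceMatrix R G (r + 1) *ᵥ 1 = ((k : R) * ((k : R) - 1) ^ r) • 1 := by
  classical
  have hadj : G.adjMatrix R *ᵥ 1 = (k : R) • 1 := by
    ext v
    simp [hreg v]
  induction r using Nat.twoStepInduction with
  | zero => simp [distanceMatrix_one, hadj]
  | one =>
    rw [distanceMatrix_two hreg hg, Matrix.sub_mulVec, ← Matrix.mulVec_mulVec, hadj,
      Matrix.mulVec_smul, hadj, Matrix.smul_mulVec, Matrix.one_mulVec]
    module
  | more r ih₁ ih₂ =>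
    rw [distanceMatrix_add_three hreg hg, Matrix.sub_mulVec, ← Matrix.mulVec_mulVec,
      ih₂ (lt_of_le_of_lt (by norm_cast; lia) hg), Matrix.mulVec_smul, hadj, Matrix.smul_mulVec,
      ih₁ (lt_of_le_of_lt (by norm_cast; lia) hg)]
    module

lemma distanceMatrix_add_two_eq_aeval [DecidableEq V] (hreg : G.IsRegularOfDegree k)
    (hg : (2 * (r + 2) : ℕ) < G.egirth) :
    distanceMatrix R G (r + 2) =
      aeval (G.adjMatrix R) (dickson 2 ((k : R) - 1) (r + 2) - dickson 2 ((k : R) - 1) r) := by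
  have hstep (p q : R[X]) (c : R) :
      G.adjMatrix R * aeval (G.adjMatrix R) p - c • aeval (G.adjMatrix R) q =
        aeval (G.adjMatrix R) (X * p - C c * q) := by
    simp [Algebra.smul_def]
  have htwo (hg : 4 < G.egirth) :
      distanceMatrix R G 2 = aeval (G.adjMatrix R) (X * X - C (k : R) * 1) := by
    rw [distanceMatrix_two hreg hg, ← hstep, aeval_X, aeval_one]
  induction r using Nat.twoStepInduction with
  | zero =>
    rw [htwo hg]
    congr 1
    simp only [dickson_add_two, dickson_one, dickson_zero, zero_add, C_sub, C_1]
    push_cast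
    ring
  | one =>
    have hone : distanceMatrix R G (0 + 1) = aeval (G.adjMatrix R) (X : R[X]) := by
      rw [zero_add, distanceMatrix_one, aeval_X]
    rw [distanceMatrix_add_three hreg hg, htwo (lt_of_le_of_lt (by norm_cast) hg), hone, hstep]
    congr 1
    simp only [dickson_add_two, dickson_one, dickson_zero, zero_add, C_sub, C_1]
    push_cast
    ring
  | more r ih₁ ih₂ =>
    rw [distanceMatrix_add_three hreg hg, ih₂ (lt_of_le_of_lt (by norm_cast; lia) hg),
      ih₁ (lt_of_le_of_lt (by norm_cast; lia) hg), hstep, dickson_add_two _ _ (r + 2),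
      dickson_add_two _ _ r]
    congr 1
    ring

end DistanceMatrix

section SumsOfSquares

section Dickson

variable {R : Type*} [CommRing R] (a : R)

lemma dickson_one_mul_dickson_add (k n d : ℕ) :
    dickson 1 a n * dickson k a (n + d) =
      dickson k a (2 * n + d) + C (a ^ n) * dickson k a d := by
  induction n using Nat.twoStepInduction generalizing d with
  | zero =>
    simp only [dickson_zero, Nat.cast_one, mul_zero, zero_add, pow_zero, C_1]
    ring
  | one =>
    rw [show 1 + d = d + 1 by ring, show 2 * 1 + d = d + 2 by ring, dickson_add_two, dickson_one,
      pow_one]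
    ring
  | more n ih₁ ih₂ =>
    have h₁ := ih₁ (d + 2)
    have h₂ := ih₂ (d + 1)
    have hd := dickson_add_two k a d
    have hn := dickson_add_two k a (2 * n + d + 2)
    rw [show n + (d + 2) = n + 2 + d by ring, show 2 * n + (d + 2) = 2 * n + d + 2 by ring] at h₁
    rw [show n + 1 + (d + 1) = n + 2 + d by ring,
      show 2 * (n + 1) + (d + 1) = 2 * n + d + 2 + 1 by ring] at h₂
    rw [show 2 * (n + 2) + d = 2 * n + d + 2 + 2 by ring, dickson_add_two 1]
    simp only [C_pow] at h₁ h₂ ⊢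
    linear_combination X * h₂ - C a * h₁ - hn - C a ^ (n + 1) * hd

lemma dickson_one_two_mul (n : ℕ) : dickson 1 a (2 * n) = dickson 1 a n ^ 2 - C (2 * a ^ n) := by
  have h := dickson_one_mul_dickson_add a 1 n 0
  simp only [add_zero, dickson_zero, Nat.cast_one] at h
  rw [C_mul, C_ofNat]
  linear_combination -h

lemma dickson_two_add_two (n : ℕ) :
    dickson 2 a (n + 2) = dickson 1 a (n + 2) + C a * dickson 2 a n := by
  induction n using Nat.twoStepInduction with
  | zero =>
    simp only [dickson_add_two, dickson_one, dickson_zero, zero_add]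
    push_cast
    ring
  | one =>
    simp only [dickson_add_two, dickson_one, dickson_zero, zero_add]
    push_cast
    ring
  | more n ih₁ ih₂ =>
    rw [dickson_add_two 2 a (n + 2), dickson_add_two 1 a (n + 2)]
    linear_combination X * ih₂ - C a * ih₁ - C a * dickson_add_two 2 a n

end Dickson

variable {q : ℝ}

lemma isSumSq_C_of_nonneg {c : ℝ} (hc : 0 ≤ c) : IsSumSq (C c : ℝ[X]) := by
  rw [← Real.mul_self_sqrt hc, C_mul]
  exact .mul_self _

lemma isSumSq_dickson_one_two_mul_add (q : ℝ) (n : ℕ) :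
    IsSumSq (dickson 1 q (2 * n) + C (2 * q ^ n)) := by
  rw [dickson_one_two_mul, sub_add_cancel, sq]
  exact .mul_self _

lemma isSumSq_dickson_two_two_mul_add (hq : 0 ≤ q) (n : ℕ) :
    IsSumSq (dickson 2 q (2 * n) + C (q ^ n * (2 * n - 1))) := by
  induction n with
  | zero => norm_num
  | succ n ih =>
    have hdecomp : dickson 2 q (2 * (n + 1)) + C (q ^ (n + 1) * (2 * (n + 1 : ℕ) - 1)) =
        (dickson 1 q (2 * (n + 1)) + C (2 * q ^ (n + 1))) +
          C q * (dickson 2 q (2 * n) + C (q ^ n * (2 * n - 1))) := by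
      rw [mul_add_one 2 n, dickson_two_add_two]
      simp only [C_mul, C_pow, C_sub, C_add, C_ofNat, C_1, Nat.cast_add_one]
      ring
    rw [hdecomp]
    exact (isSumSq_dickson_one_two_mul_add q _).add ((isSumSq_C_of_nonneg hq).mul ih)

lemma isSumSq_dickson_two_sub_add (hq : 1 ≤ q) (n : ℕ) :
    IsSumSq (dickson 2 q (2 * n + 2) - dickson 2 q (2 * n) +
      C (q ^ n * ((2 * n + 1) * q - (2 * n - 1)))) := by
  have hdecomp : dickson 2 q (2 * n + 2) - dickson 2 q (2 * n) +
      C (q ^ n * ((2 * n + 1) * q - (2 * n - 1))) =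
        (dickson 1 q (2 * (n + 1)) + C (2 * q ^ (n + 1))) +
          C (q - 1) * (dickson 2 q (2 * n) + C (q ^ n * (2 * n - 1))) := by
    rw [mul_add_one 2 n, dickson_two_add_two]
    simp only [C_mul, C_pow, C_sub, C_add, C_ofNat, C_1]
    ring
  rw [hdecomp]
  exact (isSumSq_dickson_one_two_mul_add q _).add ((isSumSq_C_of_nonneg (sub_nonneg.2 hq)).mul
    (isSumSq_dickson_two_two_mul_add (zero_le_one.trans hq) n))

section StarOrdered

variable {R A : Type*} [CommSemiring R] [StarRing R] [TrivialStar R] [Semiring A] [StarRing A]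
  [Algebra R A] [StarModule R A] {a : A}

lemma isSelfAdjoint_aeval (ha : IsSelfAdjoint a) (p : R[X]) : IsSelfAdjoint (aeval a p) := by
  induction p using Polynomial.induction_on' with
  | add p q hp hq => simpa only [map_add] using hp.add hq
  | monomial n c =>
    rw [aeval_monomial, ← Algebra.smul_def]
    exact (IsSelfAdjoint.all c).smul (ha.pow n)

lemma aeval_nonneg_of_isSumSq [PartialOrder A] [StarOrderedRing A] (ha : IsSelfAdjoint a)
    {p : R[X]} (hp : IsSumSq p) : 0 ≤ aeval a p := by
  induction hp with
  | zero => rw [map_zero]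
  | sq_add q _ ih =>
    rw [map_add, map_mul]
    exact add_nonneg (isSelfAdjoint_aeval ha q).mul_self_nonneg ih

end StarOrdered

end SumsOfSquares

section MeanSquare

variable {V : Type*} [Fintype V]

lemma mul_sq_sum_le_card_mul_dotProduct_mulVec {B : Matrix V V ℝ} (hB : B.PosSemidef) {μ : ℝ}
    (hμ : B *ᵥ 1 = μ • 1) (f : V → ℝ) :
    μ * (∑ v, f v) ^ 2 ≤ Fintype.card V * (f ⬝ᵥ B *ᵥ f) := by
  cases isEmpty_or_nonempty V
  · simp
  set n : ℝ := (Fintype.card V : ℝ)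
  set s : ℝ := ∑ v, f v
  have hn : 0 < n := by simp [n, Fintype.card_pos]
  have hμ' : 1 ᵥ* B = μ • 1 := by
    rw [← Matrix.mulVec_transpose, ← Matrix.conjTranspose_eq_transpose_of_trivial, hB.1.eq, hμ]
  have h11 : (1 : V → ℝ) ⬝ᵥ 1 = n := by simp [n]
  have hf1 : f ⬝ᵥ 1 = s := dotProduct_one f
  have h1f : 1 ⬝ᵥ f = s := one_dotProduct f
  have hquad : (n • f - s • 1) ⬝ᵥ B *ᵥ (n • f - s • 1) = n * (n * (f ⬝ᵥ B *ᵥ f) - μ * s ^ 2) := by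
    simp only [Matrix.mulVec_sub, Matrix.mulVec_smul, hμ, sub_dotProduct, dotProduct_sub,
      smul_dotProduct, dotProduct_smul, Matrix.dotProduct_mulVec 1, hμ', h11, hf1, h1f, smul_eq_mul]
    ring
  have hnonneg := hB.dotProduct_mulVec_nonneg (n • f - s • 1)
  rw [star_trivial, hquad] at hnonneg
  exact sub_nonneg.1 (nonneg_of_mul_nonneg_right hnonneg hn)

end MeanSquare

section SelfMixing

variable {V : Type*} [Fintype V] {G : SimpleGraph V} [DecidableRel G.Adj] {k h r : ℕ}

open scoped MatrixOrder in
lemma posSemidef_distanceMatrix_add [DecidableEq V] (hreg : G.IsRegularOfDegree k)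
    (hk : 2 ≤ k) (hg : (2 * (2 * h + 2) : ℕ) < G.egirth) :
    (distanceMatrix ℝ G (2 * h + 2) +
      (((k : ℝ) - 1) ^ h * ((2 * h + 1) * ((k : ℝ) - 1) - (2 * h - 1))) • 1).PosSemidef := by
  have hq : (1 : ℝ) ≤ (k : ℝ) - 1 := by
    rw [le_sub_iff_add_le]
    exact_mod_cast hk
  have hself : IsSelfAdjoint (G.adjMatrix ℝ) :=
    (conjTranspose_eq_transpose_of_trivial _).trans G.transpose_adjMatrix
  have hnonneg := aeval_nonneg_of_isSumSq hself (isSumSq_dickson_two_sub_add hq h)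
  rwa [map_add, ← distanceMatrix_add_two_eq_aeval hreg hg, aeval_C, Algebra.algebraMap_eq_smul_one,
    Matrix.nonneg_iff_posSemidef] at hnonneg

lemma indicator_dotProduct_distanceMatrix_mulVec_indicator (G : SimpleGraph V) (S : Finset V)
    (hr : r ≠ 0) :
    (S : Set V).indicator 1 ⬝ᵥ distanceMatrix ℝ G r *ᵥ (S : Set V).indicator 1 =
      (Set.ncard {p : V × V | p.1 ∈ S ∧ p.2 ∈ S ∧ G.dist p.1 p.2 = r} : ℝ) := by
  classical
  have : NeZero r := ⟨hr⟩
  have hedist (u v : V) : G.edist u v = r ↔ G.dist u v = r :=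
    (ENat.toNat_eq_iff_eq_natCast _ _).symm
  have hpairs : {p : V × V | p.1 ∈ S ∧ p.2 ∈ S ∧ G.dist p.1 p.2 = r} =
      ↑((S ×ˢ S).filter fun p : V × V ↦ G.dist p.1 p.2 = r) := by
    ext p
    simp [and_assoc]
  rw [hpairs, Set.ncard_coe_finset, Finset.card_filter, Nat.cast_sum, Finset.sum_product]
  simp [dotProduct, Matrix.mulVec, distanceMatrix, hedist, Set.indicator_apply]

lemma mul_sq_card_le_card_mul_ncard_dist_eq_add [DecidableEq V] (hreg : G.IsRegularOfDegree k)
    (hg : (2 * (r + 1) : ℕ) < G.egirth) {c : ℝ}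
    (hpsd : (distanceMatrix ℝ G (r + 1) + c • 1).PosSemidef) (S : Finset V) :
    (k * ((k : ℝ) - 1) ^ r + c) * (S.card : ℝ) ^ 2 ≤ Fintype.card V *
      (Set.ncard {p : V × V | p.1 ∈ S ∧ p.2 ∈ S ∧ G.dist p.1 p.2 = r + 1} + c * S.card) := by
  have hrow : (distanceMatrix ℝ G (r + 1) + c • 1) *ᵥ 1 = (k * ((k : ℝ) - 1) ^ r + c) • 1 := by
    rw [Matrix.add_mulVec, distanceMatrix_succ_mulVec_one hreg hg, Matrix.smul_mulVec,
      Matrix.one_mulVec, add_smul]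
  have hsum : ∑ v, (S : Set V).indicator (1 : V → ℝ) v = S.card := by
    simp [Set.indicator_apply]
  have hnorm : (S : Set V).indicator (1 : V → ℝ) ⬝ᵥ (S : Set V).indicator 1 = S.card := by
    simp [dotProduct, Set.indicator_apply]
  have hmean := mul_sq_sum_le_card_mul_dotProduct_mulVec hpsd hrow ((S : Set V).indicator 1)
  rwa [hsum, Matrix.add_mulVec, dotProduct_add, Matrix.smul_mulVec, Matrix.one_mulVec,
    dotProduct_smul, hnorm,
    indicator_dotProduct_distanceMatrix_mulVec_indicator G S r.succ_ne_zero,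
    smul_eq_mul] at hmean

lemma card_div_card_mul_sub_le_ncard_dist_eq_div [DecidableEq V] (hreg : G.IsRegularOfDegree k)
    (hg : (2 * (r + 1) : ℕ) < G.egirth) {c : ℝ} (hc : 0 ≤ c)
    (hpsd : (distanceMatrix ℝ G (r + 1) + c • 1).PosSemidef) {S : Finset V} (hS : S.Nonempty) :
    (S.card : ℝ) / Fintype.card V * (k * ((k : ℝ) - 1) ^ r) - c ≤
      (Set.ncard {p : V × V | p.1 ∈ S ∧ p.2 ∈ S ∧ G.dist p.1 p.2 = r + 1} : ℝ) / S.card := by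
  have hs : (0 : ℝ) < S.card := mod_cast hS.card_pos
  have hn : (0 : ℝ) < Fintype.card V := mod_cast Fintype.card_pos_iff.2 ⟨hS.choose⟩
  rw [le_div_iff₀ hs, ← mul_le_mul_iff_of_pos_left hn]
  calc Fintype.card V * (((S.card : ℝ) / Fintype.card V * (k * ((k : ℝ) - 1) ^ r) - c) * S.card)
      = k * ((k : ℝ) - 1) ^ r * (S.card : ℝ) ^ 2 - Fintype.card V * (c * S.card) := by
        field_simp
    _ ≤ (k * ((k : ℝ) - 1) ^ r + c) * (S.card : ℝ) ^ 2 - Fintype.card V * (c * S.card) := by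
        gcongr
        exact le_add_of_nonneg_right hc
    _ ≤ _ := by
        rw [sub_le_iff_le_add, ← mul_add]
        exact mul_sq_card_le_card_mul_ncard_dist_eq_add hreg hg hpsd S

lemma card_div_card_mul_sub_le_ncard_dist_eq_two_mul_add_two_div (hreg : G.IsRegularOfDegree k)
    (hk : 2 ≤ k) (hg : (2 * (2 * h + 2) : ℕ) < G.egirth) {S : Finset V} (hS : S.Nonempty) :
    (S.card : ℝ) / Fintype.card V * (k * ((k : ℝ) - 1) ^ (2 * h + 1)) -
        ((k : ℝ) - 1) ^ h * (k * (2 * h + 3)) ≤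
      (Set.ncard {p : V × V | p.1 ∈ S ∧ p.2 ∈ S ∧ G.dist p.1 p.2 = 2 * h + 2} : ℝ) / S.card := by
  classical
  have hk' : (2 : ℝ) ≤ k := mod_cast hk
  have hpow : 0 ≤ ((k : ℝ) - 1) ^ h := pow_nonneg (by linarith) h
  have hnonneg : 0 ≤ (2 * h + 1) * ((k : ℝ) - 1) - (2 * h - 1) := by
    nlinarith [h.cast_nonneg (α := ℝ)]
  have hle : (2 * h + 1) * ((k : ℝ) - 1) - (2 * h - 1) ≤ k * (2 * h + 3) := by
    nlinarith [h.cast_nonneg (α := ℝ)]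
  exact (sub_le_sub_left (mul_le_mul_of_nonneg_left hle hpow) _).trans
    (card_div_card_mul_sub_le_ncard_dist_eq_div hreg hg (mul_nonneg hpow hnonneg)
      (posSemidef_distanceMatrix_add hreg hk hg) hS)

lemma half_mul_le_mul_sub_of_div_le {h : ℕ} {q k t x : ℝ} (hq : 0 < q) (hk : 0 ≤ k)
    (hx : 2 * t / q ^ (h + 1) ≤ x) :
    k * q ^ (2 * h + 1) * x / 2 ≤ x * (k * q ^ (2 * h + 1)) - q ^ h * (k * t) := by
  rw [div_le_iff₀ (by positivity)] at hx
  have hmul : k * q ^ h * (2 * t) ≤ k * q ^ h * (x * q ^ (h + 1)) := by gcongr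
  have hpow : k * q ^ h * (x * q ^ (h + 1)) = x * (k * q ^ (2 * h + 1)) := by ring
  linarith

end SelfMixing

theorem self_mixing_distance_m_graph_general {V : Type*} [Fintype V]
    {G : SimpleGraph V} [DecidableRel G.Adj] {k : ℕ} (hreg : G.IsRegularOfDegree k)
    {m : ℕ} (hm_even : Even m) (hm_pos : 0 < m) (hm_lt : 2 * m < G.girth)
    {S : Finset V} (hS : S.Nonempty) :
    ((S.card : ℝ) / (Fintype.card V : ℝ)) * ((k : ℝ) * ((k : ℝ) - 1) ^ (m - 1)) -
        ((k : ℝ) - 1) ^ (m / 2 - 1) * ((k : ℝ) * ((m : ℝ) + 1)) ≤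
      (Set.ncard {p : V × V | p.1 ∈ S ∧ p.2 ∈ S ∧ G.dist p.1 p.2 = m} : ℝ) / (S.card : ℝ) ∧
    ((2 * (m : ℝ) + 2) / ((k : ℝ) - 1) ^ (m / 2) ≤ (S.card : ℝ) / (Fintype.card V : ℝ) →
      (k : ℝ) * ((k : ℝ) - 1) ^ (m - 1) * (S.card : ℝ) / (2 * (Fintype.card V : ℝ)) ≤
        (Set.ncard {p : V × V | p.1 ∈ S ∧ p.2 ∈ S ∧ G.dist p.1 p.2 = m} : ℝ) / (S.card : ℝ)) := by
  have hegirth : (2 * m : ℕ) < G.egirth :=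
    (Nat.cast_lt.2 hm_lt).trans_le (ENat.natCast_toNat_le_self _)
  have hk : 2 ≤ k := two_le_of_isRegularOfDegree_of_not_isAcyclic hreg fun hacyc ↦ by
    simp [girth_eq_zero.2 hacyc] at hm_lt
  obtain ⟨h, rfl⟩ : ∃ h, m = 2 * h + 2 := by
    obtain ⟨a, rfl⟩ := hm_even
    exact ⟨a - 1, by lia⟩
  rw [show 2 * h + 2 - 1 = 2 * h + 1 by lia, show (2 * h + 2) / 2 = h + 1 by lia,
    Nat.add_sub_cancel, show ((2 * h + 2 : ℕ) : ℝ) + 1 = 2 * h + 3 by push_cast; ring,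
    show 2 * ((2 * h + 2 : ℕ) : ℝ) + 2 = 2 * (2 * h + 3) by push_cast; ring]
  have hbound := card_div_card_mul_sub_le_ncard_dist_eq_two_mul_add_two_div hreg hk hegirth hS
  refine ⟨hbound, fun hdense ↦ le_trans ?_ hbound⟩
  have hq : (0 : ℝ) < (k : ℝ) - 1 := sub_pos.2 (mod_cast hk)
  refine le_trans (le_of_eq ?_) (half_mul_le_mul_sub_of_div_le hq k.cast_nonneg hdense)
  ring

/-- **Self-mixing estimate for distance-`m` graphs of large-girth regular graphs
(Bartal–Linial–Mendel–Naor).** Let `G` be a finite connected `k`-regular simple graph on `n`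
vertices with girth `g`, let `m` be an even integer with `0 < m < g/2`, and let `S ⊆ V` be
nonempty. Writing `2 E_{G^{(m)}}(S)` for the number of ordered pairs `(u,v) ∈ S × S` with
`d_G(u,v) = m`, one has
`2 E_{G^{(m)}}(S)/|S| ≥ (|S|/n)·k(k-1)^{m-1} - (k-1)^{m/2-1} k(m+1)`; in particular, if
`|S|/n ≥ (2m+2)/(k-1)^{m/2}` then `2 E_{G^{(m)}}(S)/|S| ≥ k(k-1)^{m-1}|S|/(2n)`. -/
theorem self_mixing_distance_m_graph (V : Type u) [Fintype V] [DecidableEq V]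
    (G : SimpleGraph V) [DecidableRel G.Adj] (k : ℕ) (hreg : G.IsRegularOfDegree k)
    (hconn : G.Connected) (g : ℕ) (hg : G.girth = (g : ℕ∞))
    (m : ℕ) (hm_even : Even m) (hm_pos : 0 < m) (hm_lt : 2 * m < g)
    (S : Finset V) (hS : S.Nonempty) :
    ((S.card : ℝ) / (Fintype.card V : ℝ)) * ((k : ℝ) * ((k : ℝ) - 1) ^ (m - 1)) -
        ((k : ℝ) - 1) ^ (m / 2 - 1) * ((k : ℝ) * ((m : ℝ) + 1)) ≤
      (Set.ncard {p : V × V | p.1 ∈ S ∧ p.2 ∈ S ∧ G.dist p.1 p.2 = m} : ℝ) / (S.card : ℝ) ∧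
    ((2 * (m : ℝ) + 2) / ((k : ℝ) - 1) ^ (m / 2) ≤ (S.card : ℝ) / (Fintype.card V : ℝ) →
      (k : ℝ) * ((k : ℝ) - 1) ^ (m - 1) * (S.card : ℝ) / (2 * (Fintype.card V : ℝ)) ≤
        (Set.ncard {p : V × V | p.1 ∈ S ∧ p.2 ∈ S ∧ G.dist p.1 p.2 = m} : ℝ) / (S.card : ℝ)) := by
  have hgirth : G.girth = g := mod_cast hg
  exact self_mixing_distance_m_graph_general hreg hm_even hm_pos (hgirth ▸ hm_lt) hS
end

section
/- Let (M, d_M) be a finite ultrametric space. Then there exists a map f from M into a real Hilbert space H such that ‖f(x) − f(y)‖_H = d_M(x,y) for all x,y ∈ M and ‖f(x)‖_H = diam(M)/√2 for all x ∈ M, where diam(M) = max_{x,y∈M} d_M(x,y); i.e., M embeds isometrically into the sphere of radius diam(M)/√2 of a Hilbert space (one may take H = ℓ_2). -/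
universe u

/-!
In an ultrametric space the open balls of a fixed radius `r` partition the space. If the space is
separable, the blocks can be labelled measurably in `r` by natural numbers: label the ball around
`x` by the first member of a dense sequence that it contains. Let `N x r` be this label, so that
`N x r = N y r` exactly when `dist x y < r`.

If all distances are at most `D`, send `x` to `1 / √2` times the indicator function in `L²(ℝ × ℕ)`
of the graph of `t ↦ N x √t` over `(0, D²]`. The graphs of `x` and `y` agree exactly over
`((dist x y)², D²]`, so the images of `x` and `y` have inner product `(D² - (dist x y)²) / 2`,
which encodes both the distances and the radius of the sphere. Finally, `L²(ℝ × ℕ)` is separable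
and hence embeds into `ℓ²`.
-/

open MeasureTheory Set TopologicalSpace

section SeparableHilbert

variable {𝕜 E : Type*} [RCLike 𝕜] [NormedAddCommGroup E] [InnerProductSpace 𝕜 E]

theorem dist_eq_sqrt_two_of_orthonormal {ι : Type*} {v : ι → E} (hv : Orthonormal 𝕜 v)
    {i j : ι} (hij : i ≠ j) : dist (v i) (v j) = √2 := by
  rw [dist_eq_norm, eq_comm, Real.sqrt_eq_iff_eq_sq zero_le_two (norm_nonneg _),
    @norm_sub_sq 𝕜, hv.2 hij, hv.1 i, hv.1 j]
  norm_num

theorem countable_of_orthonormal [SeparableSpace E] {ι : Type*} {v : ι → E}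
    (hv : Orthonormal 𝕜 v) : Countable ι := by
  have disjoint_balls : Pairwise (Function.onFun Disjoint fun i ↦ Metric.ball (v i) (1 / 2)) := by
    intro i j hij
    apply Metric.ball_disjoint_ball
    rw [dist_eq_sqrt_two_of_orthonormal hv hij, add_halves]
    exact Real.one_le_sqrt.2 one_le_two
  exact disjoint_balls.countable_of_isOpen_disjoint (fun _ ↦ Metric.isOpen_ball)
    fun i ↦ ⟨v i, Metric.mem_ball_self one_half_pos⟩

variable (𝕜 E) in
theorem nonempty_linearIsometry_l2_nat [CompleteSpace E] [SeparableSpace E] :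
    Nonempty (E →ₗᵢ[𝕜] lp (fun _ : ℕ ↦ 𝕜) 2) := by
  obtain ⟨w, b, -⟩ := exists_hilbertBasis 𝕜 E
  have : Countable w := countable_of_orthonormal b.orthonormal
  obtain ⟨label, label_injective⟩ := Countable.exists_injective_nat w
  let stdBasis : HilbertBasis ℕ 𝕜 (lp (fun _ : ℕ ↦ 𝕜) 2) := .ofRepr (.refl 𝕜 _)
  have relabelled := (stdBasis.orthonormal.comp label label_injective).orthogonalFamily
  exact ⟨relabelled.linearIsometry.comp b.repr.toLinearIsometry⟩

end SeparableHilbert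

section Graph

variable {α β : Type*}

theorem graphOn_inter_graphOn (f g : α → β) (s : Set α) :
    s.graphOn f ∩ s.graphOn g = (s ∩ {a | f a = g a}).graphOn f := by
  ext ⟨a, b⟩
  simp only [mem_inter_iff, mem_graphOn, mem_ofPred_eq]
  grind

variable [MeasurableSpace α] [MeasurableSpace β]

theorem measurableSet_graphOn [MeasurableEq β] {f : α → β} (hf : Measurable f) {s : Set α}
    (hs : MeasurableSet s) : MeasurableSet (s.graphOn f) := by
  have graphOn_eq : s.graphOn f = Prod.fst ⁻¹' s ∩ {p | f p.1 = p.2} := by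
    ext p
    simp
  rw [graphOn_eq]
  exact (measurable_fst hs).inter (measurableSet_eq_fun (hf.comp measurable_fst) measurable_snd)

theorem prod_count_graphOn [Countable β] [MeasurableSingletonClass β] (μ : Measure α)
    {f : α → β} (hf : Measurable f) {s : Set α} (hs : MeasurableSet s) :
    μ.prod Measure.count (s.graphOn f) = μ s := by
  have count_section (a : α) :
      Measure.count (Prod.mk a ⁻¹' s.graphOn f) = s.indicator 1 a := by
    by_cases ha : a ∈ s
    · have section_eq : Prod.mk a ⁻¹' s.graphOn f = {f a} := by
        ext b
        simp [ha, eq_comm]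
      simp [section_eq, ha]
    · have section_eq : Prod.mk a ⁻¹' s.graphOn f = ∅ := by
        ext b
        simp [ha]
      simp [section_eq, ha]
  simp_rw [Measure.prod_apply (measurableSet_graphOn hf hs), count_section]
  exact lintegral_indicator_one hs

theorem exists_inner_eq_measureReal_agreement_mul_sq [Countable β] [MeasurableSingletonClass β]
    (μ : Measure α) {ι : Type*} {L : ι → α → β} (hL : ∀ i, Measurable (L i)) {s : Set α}
    (hs : MeasurableSet s) (hμs : μ s ≠ ⊤) (c : ℝ) :
    ∃ f : ι → Lp ℝ 2 (μ.prod (Measure.count : Measure β)),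
      ∀ i j, inner ℝ (f i) (f j) = μ.real (s ∩ {a | L i a = L j a}) * c ^ 2 := by
  have graph_measurable (i : ι) : MeasurableSet (s.graphOn (L i)) :=
    measurableSet_graphOn (hL i) hs
  have graph_finite (i : ι) : μ.prod Measure.count (s.graphOn (L i)) ≠ ⊤ := by
    rwa [prod_count_graphOn μ (hL i) hs]
  have measure_inter (i j : ι) :
      (μ.prod Measure.count).real (s.graphOn (L i) ∩ s.graphOn (L j)) =
        μ.real (s ∩ {a | L i a = L j a}) := by
    rw [graphOn_inter_graphOn, measureReal_def, measureReal_def,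
      prod_count_graphOn μ (hL i) (hs.inter (measurableSet_eq_fun (hL i) (hL j)))]
  refine ⟨fun i ↦ indicatorConstLp 2 (graph_measurable i) (graph_finite i) c, fun i j ↦ ?_⟩
  rw [L2.inner_indicatorConstLp_indicatorConstLp (graph_measurable i) (graph_measurable j)
    (graph_finite i) (graph_finite j), measure_inter, real_inner_self_eq_norm_sq,
    Real.norm_eq_abs, sq_abs, smul_eq_mul]

end Graph

section Ultrametric

variable {M : Type*} [PseudoMetricSpace M]

theorem dist_lt_iff_of_dist_lt [IsUltrametricDist M] {x y z : M} {r : ℝ} (hxy : dist x y < r) :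
    dist x z < r ↔ dist y z < r := by
  rw [← Metric.mem_ball', ← Metric.mem_ball',
    IsUltrametricDist.ball_eq_of_mem (Metric.mem_ball'.2 hxy)]

variable (M) in
theorem exists_measurable_ball_label [IsUltrametricDist M] [SeparableSpace M] :
    ∃ N : M → ℝ → ℕ, (∀ x, Measurable (N x)) ∧
      ∀ x y r, 0 < r → (N x r = N y r ↔ dist x y < r) := by
  classical
  rcases isEmpty_or_nonempty M with _ | _
  · exact ⟨isEmptyElim, isEmptyElim, isEmptyElim⟩
  have hits (x : M) (r : ℝ) : ∃ n, 0 < r → dist x (denseSeq M n) < r := by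
    by_cases hr : 0 < r
    · obtain ⟨n, hn⟩ := (denseRange_denseSeq M).exists_dist_lt x hr
      exact ⟨n, fun _ ↦ hn⟩
    · exact ⟨0, fun h ↦ absurd h hr⟩
  refine ⟨fun x r ↦ Nat.find (hits x r), fun x ↦ measurable_find (hits x) fun n ↦ ?_,
    fun x y r hr ↦ ⟨fun same_label ↦ ?_, fun hxy ↦ ?_⟩⟩
  · exact (measurableSet_lt measurable_const measurable_id).imp
      (measurableSet_lt measurable_const measurable_id)
  · have hx : dist (denseSeq M (Nat.find (hits x r))) x < r :=
      (dist_comm _ _).trans_lt (Nat.find_spec (hits x r) hr)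
    have hy : dist (denseSeq M (Nat.find (hits y r))) y < r :=
      (dist_comm _ _).trans_lt (Nat.find_spec (hits y r) hr)
    rw [← show Nat.find (hits x r) = Nat.find (hits y r) from same_label] at hy
    exact (dist_lt_iff_of_dist_lt hx).1 hy
  · simp only [dist_lt_iff_of_dist_lt hxy]

theorem exists_inner_eq_sq_sub_dist_sq_div_two [IsUltrametricDist M] [SeparableSpace M] {D : ℝ}
    (hD : ∀ x y : M, dist x y ≤ D) :
    ∃ f : M → Lp ℝ 2 ((volume : Measure ℝ).prod (Measure.count : Measure ℕ)),
      ∀ x y, inner ℝ (f x) (f y) = (D ^ 2 - dist x y ^ 2) / 2 := by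
  obtain ⟨N, N_measurable, N_eq_iff⟩ := exists_measurable_ball_label M
  let labelAt (x : M) (t : ℝ) : ℕ := N x √t
  have labelAt_measurable (x : M) : Measurable (labelAt x) :=
    (N_measurable x).comp Real.continuous_sqrt.measurable
  have agreement (x y : M) :
      Ioc 0 (D ^ 2) ∩ {t | labelAt x t = labelAt y t} = Ioc (dist x y ^ 2) (D ^ 2) := by
    ext t
    have eq_iff (ht : 0 < t) : labelAt x t = labelAt y t ↔ dist x y ^ 2 < t :=
      (N_eq_iff x y √t (Real.sqrt_pos.2 ht)).trans (Real.lt_sqrt dist_nonneg)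
    have := sq_nonneg (dist x y)
    simp only [mem_inter_iff, mem_ofPred_eq, mem_Ioc]
    grind
  obtain ⟨f, inner_f⟩ := exists_inner_eq_measureReal_agreement_mul_sq volume labelAt_measurable
    (measurableSet_Ioc (a := 0) (b := D ^ 2)) measure_Ioc_lt_top.ne (√2)⁻¹
  refine ⟨f, fun x y ↦ ?_⟩
  have dist_sq_le : dist x y ^ 2 ≤ D ^ 2 := by
    gcongr
    exact hD x y
  rw [inner_f, agreement, Real.volume_real_Ioc_of_le dist_sq_le, inv_pow,
    Real.sq_sqrt zero_le_two, div_eq_mul_inv]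

variable {H : Type*} [NormedAddCommGroup H] [InnerProductSpace ℝ H] {f : M → H} {D : ℝ}

theorem norm_eq_div_sqrt_two_of_inner_eq (hD : 0 ≤ D)
    (hf : ∀ x y, inner ℝ (f x) (f y) = (D ^ 2 - dist x y ^ 2) / 2) (x : M) :
    ‖f x‖ = D / √2 := by
  rw [norm_eq_sqrt_real_inner, hf, dist_self, zero_pow two_ne_zero, sub_zero,
    Real.sqrt_div (sq_nonneg D), Real.sqrt_sq hD]

theorem norm_sub_eq_dist_of_inner_eq
    (hf : ∀ x y, inner ℝ (f x) (f y) = (D ^ 2 - dist x y ^ 2) / 2) (x y : M) :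
    ‖f x - f y‖ = dist x y := by
  rw [← sq_eq_sq₀ (norm_nonneg _) dist_nonneg, norm_sub_sq_real, ← real_inner_self_eq_norm_sq,
    ← real_inner_self_eq_norm_sq, hf, hf, hf, dist_self, dist_self]
  ring

end Ultrametric

theorem finite_ultrametric_isometric_sphere_embedding_general (M : Type*) [PseudoMetricSpace M]
    [IsUltrametricDist M] [SeparableSpace M] [BoundedSpace M] :
    ∃ f : M → lp (fun _ : ℕ ↦ ℝ) 2,
      (∀ x y : M, ‖f x - f y‖ = dist x y) ∧
      (∀ x : M, ‖f x‖ = Metric.diam (univ : Set M) / √2) := by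
  have dist_le_diam (x y : M) : dist x y ≤ Metric.diam (univ : Set M) :=
    Metric.dist_le_diam_of_mem (.all _) (mem_univ x) (mem_univ y)
  obtain ⟨g, inner_g⟩ := exists_inner_eq_sq_sub_dist_sq_div_two dist_le_diam
  have : Fact ((2 : ENNReal) ≠ ⊤) := ⟨ENNReal.ofNat_ne_top⟩
  obtain ⟨J⟩ := nonempty_linearIsometry_l2_nat ℝ
    (Lp ℝ 2 ((volume : Measure ℝ).prod (Measure.count : Measure ℕ)))
  have inner_Jg (x y : M) := (J.inner_map_map (g x) (g y)).trans (inner_g x y)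
  exact ⟨J ∘ g, norm_sub_eq_dist_of_inner_eq inner_Jg,
    norm_eq_div_sqrt_two_of_inner_eq Metric.diam_nonneg inner_Jg⟩

/-- **Finite ultrametric spaces embed isometrically into a Hilbert sphere.** Every finite
ultrametric space `M` embeds isometrically into the sphere of radius `diam(M)/√2` of the
Hilbert space `ℓ₂`. -/
theorem finite_ultrametric_isometric_sphere_embedding (M : Type u) [MetricSpace M] [Fintype M]
    (hult : ∀ x y z : M, dist x z ≤ max (dist x y) (dist y z)) :
    ∃ f : M → lp (fun _ : ℕ => ℝ) 2,
      (∀ x y : M, ‖f x - f y‖ = dist x y) ∧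
      (∀ x : M, ‖f x‖ = Metric.diam (Set.univ : Set M) / Real.sqrt 2) :=
  have : IsUltrametricDist M := ⟨hult⟩
  finite_ultrametric_isometric_sphere_embedding_general M
end
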